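/- Let d ≥ 2, let Σ ⊂ GL_d(ℝ) be a compact subset, and let μ₀ be a Borel probability measure supported in Σ which is quasi-irreducible and satisfies L_1(μ₀) > L_2(μ₀). Then there exist α ∈ (0,1], θ > 1, C > 0 and ε > 0 such that for every Borel probability measure μ supported in Σ with ‖μ − μ₀‖_TV < ε, every n ≥ 1 and every α-Hölder φ : ℙ(ℝ^d) → ℝ, v_α(Q_μ^n φ) ≤ C θ^{−n} v_α(φ). -/

import Mathlib

open MeasureTheory Filter
open scoped LinearAlgebra.Projectivization

noncomputable section

abbrev GLd (d : ℕ) := GL (Fin d) ℝ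
abbrev Ed (d : ℕ) := EuclideanSpace ℝ (Fin d)
abbrev Pd (d : ℕ) := ℙ ℝ (Ed d)

variable {d : ℕ}

instance : MeasurableSpace (GLd d) := borel _
instance : BorelSpace (GLd d) := ⟨rfl⟩

instance : TopologicalSpace (Pd d) :=
  (instTopologicalSpaceQuotient : TopologicalSpace (Quotient (projectivizationSetoid ℝ (Ed d))))
instance : MeasurableSpace (Pd d) := borel _
instance : BorelSpace (Pd d) := ⟨rfl⟩

/-- The continuous linear map on Euclidean space induced by `g ∈ GL_d(ℝ)`. -/
def glCLM (g : GLd d) : Ed d →L[ℝ] Ed d :=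
  Matrix.toEuclideanCLM (𝕜 := ℝ) (g : Matrix (Fin d) (Fin d) ℝ)

/-- The operator norm of `g ∈ GL_d(ℝ)`. -/
def gnorm (g : GLd d) : ℝ := ‖glCLM g‖

lemma glCLM_leftInv (g : GLd d) (v : Ed d) : glCLM g⁻¹ (glCLM g v) = v := by
  have h : glCLM (d := d) g⁻¹ * glCLM g = 1 := by
    rw [glCLM, glCLM, ← map_mul]
    norm_cast
    rw [inv_mul_cancel g]
    exact map_one _
  calc glCLM g⁻¹ (glCLM g v) = (glCLM g⁻¹ * glCLM g) v := rfl
    _ = v := by rw [h]; rfl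

lemma glLinear_injective (g : GLd d) : Function.Injective (glCLM g).toLinearMap :=
  Function.LeftInverse.injective (g := (glCLM g⁻¹)) (fun v => glCLM_leftInv g v)

/-- The projective action of `g ∈ GL_d(ℝ)` on `ℙ(ℝ^d)`. -/
def pact (g : GLd d) : Pd d → Pd d :=
  Projectivization.map (glCLM g).toLinearMap (glLinear_injective g)

/-- The projective distance `δ` on `ℙ(ℝ^d)`, computed on representatives. -/
def pdelta (x y : Pd d) : ℝ :=
  Real.sqrt (‖x.rep‖ ^ 2 * ‖y.rep‖ ^ 2 - (inner ℝ x.rep y.rep : ℝ) ^ 2) /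
    (‖x.rep‖ * ‖y.rep‖)

/-- Convolution of two measures on `GL_d(ℝ)`. -/
def mconv (μ ν : Measure (GLd d)) : Measure (GLd d) :=
  (μ.prod ν).map (fun p => p.1 * p.2)

/-- `n`-fold convolution power of a measure on `GL_d(ℝ)`. -/
def mconvN (μ : Measure (GLd d)) : ℕ → Measure (GLd d)
  | 0 => Measure.dirac 1
  | n + 1 => if n = 0 then μ else mconv (mconvN μ n) μ

/-- The top Lyapunov exponent of a (compactly supported) measure on `GL_d(ℝ)`. -/
def L1 (μ : Measure (GLd d)) : ℝ :=
  limUnder atTop (fun n : ℕ => (n : ℝ)⁻¹ * ∫ g, Real.log (gnorm g) ∂(mconvN μ n))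

/-- `N₂ g = s₁(g)s₂(g)`, the product of the two largest singular values. -/
def N2 (g : GLd d) : ℝ :=
  sSup { x | ∃ p q : Ed d, ‖p‖ = 1 ∧ ‖q‖ = 1 ∧ (inner ℝ p q : ℝ) = 0 ∧
    x = Real.sqrt (‖glCLM g p‖ ^ 2 * ‖glCLM g q‖ ^ 2 -
      (inner ℝ (glCLM g p) (glCLM g q) : ℝ) ^ 2) }

/-- `L₁(μ) + L₂(μ)`. -/
def L12 (μ : Measure (GLd d)) : ℝ :=
  limUnder atTop (fun n : ℕ => (n : ℝ)⁻¹ * ∫ g, Real.log (N2 g) ∂(mconvN μ n))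

/-- The second Lyapunov exponent. -/
def L2 (μ : Measure (GLd d)) : ℝ := L12 μ - L1 μ

/-- The top Lyapunov exponent of the restriction of `μ` to an (invariant) subspace `V`. -/
def L1rest (μ : Measure (GLd d)) (V : Submodule ℝ (Ed d)) : ℝ :=
  limUnder atTop (fun n : ℕ => (n : ℝ)⁻¹ *
    ∫ g, Real.log ‖LinearMap.toContinuousLinearMap ((glCLM g).toLinearMap.domRestrict V)‖
      ∂(mconvN μ n))

/-- Quasi-irreducibility of a measure on `GL_d(ℝ)`. -/
def QuasiIrreducible (μ : Measure (GLd d)) : Prop :=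
  ¬ ∃ V : Submodule ℝ (Ed d), V ≠ ⊥ ∧ V ≠ ⊤ ∧
    (∀ᵐ g ∂μ, V.map (glCLM g).toLinearMap = V) ∧ L1rest μ V < L1 μ

/-- Irreducibility of a measure on `GL_d(ℝ)`. -/
def Irred (μ : Measure (GLd d)) : Prop :=
  ¬ ∃ V : Submodule ℝ (Ed d), V ≠ ⊥ ∧ V ≠ ⊤ ∧
    (∀ᵐ g ∂μ, V.map (glCLM g).toLinearMap = V)

/-- The Markov operator associated with a measure on `GL_d(ℝ)`. -/
def Qop (μ : Measure (GLd d)) (φ : Pd d → ℝ) : Pd d → ℝ :=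
  fun v => ∫ g, φ (pact g v) ∂μ

/-- The average `α`-Hölder constant of a measure on `GL_d(ℝ)`. -/
def kalpha (α : ℝ) (μ : Measure (GLd d)) : ℝ :=
  sSup { x | ∃ v₁ v₂ : Pd d, v₁ ≠ v₂ ∧
    x = ∫ g, (pdelta (pact g v₁) (pact g v₂) / pdelta v₁ v₂) ^ α ∂μ }

/-- The `α`-Hölder seminorm of an observable on `ℙ(ℝ^d)`. -/
def valpha (α : ℝ) (φ : Pd d → ℝ) : ℝ :=
  sSup { x | ∃ v₁ v₂ : Pd d, v₁ ≠ v₂ ∧ x = |φ v₁ - φ v₂| / pdelta v₁ v₂ ^ α }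

/-- `φ` is `α`-Hölder: `v_α(φ) < ∞`. -/
def IsHolder (α : ℝ) (φ : Pd d → ℝ) : Prop :=
  BddAbove { x | ∃ v₁ v₂ : Pd d, v₁ ≠ v₂ ∧ x = |φ v₁ - φ v₂| / pdelta v₁ v₂ ^ α }

/-- The total variation distance between two finite measures. -/
def tvDist (μ ν : Measure (GLd d)) [IsFiniteMeasure μ] [IsFiniteMeasure ν] : ℝ :=
  ((μ.toSignedMeasure - ν.toSignedMeasure).totalVariation Set.univ).toReal

/-- A measure is compactly supported. -/
def CompactlySupported (μ : Measure (GLd d)) : Prop :=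
  ∃ K : Set (GLd d), IsCompact K ∧ μ Kᶜ = 0

/-- `S` is the (topological) support of `μ`. -/
def IsSupport (μ : Measure (GLd d)) (S : Set (GLd d)) : Prop :=
  μ Sᶜ = 0 ∧ ∀ x ∈ S, ∀ U : Set (GLd d), IsOpen U → x ∈ U → 0 < μ U

/-- A measure `η` on `ℙ(ℝ^d)` is `μ`-stationary. -/
def Stationary (μ : Measure (GLd d)) (η : Measure (Pd d)) : Prop :=
  ∀ φ : Pd d → ℝ, Continuous φ → (∃ C, ∀ v, |φ v| ≤ C) →
    ∫ v, φ v ∂η = ∫ g, ∫ v, φ (pact g v) ∂η ∂μ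



/-! ### Part 1: basic facts about `glCLM` -/

instance instSCT : SecondCountableTopology (GLd d) := by
  haveI : SecondCountableTopology (Matrix (Fin d) (Fin d) ℝ) :=
    inferInstanceAs (SecondCountableTopology (Fin d → Fin d → ℝ))
  haveI : SecondCountableTopology (Matrix (Fin d) (Fin d) ℝ)ᵐᵒᵖ :=
    (MulOpposite.opHomeomorph (M := Matrix (Fin d) (Fin d) ℝ)).symm.isInducing.secondCountableTopology
  exact (Units.isEmbedding_embedProduct (M := Matrix (Fin d) (Fin d) ℝ)).secondCountableTopology

instance instMM2 : MeasurableMul₂ (GLd d) := ContinuousMul.measurableMul₂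

lemma glCLM_mul (g h : GLd d) (v : Ed d) : glCLM (g * h) v = glCLM g (glCLM h v) := by
  have h : glCLM (d := d) (g * h) = glCLM g * glCLM h := by
    rw [glCLM, glCLM, glCLM, ← map_mul]
    norm_cast
  rw [h]; rfl

lemma glCLM_one (v : Ed d) : glCLM (1 : GLd d) v = v := by
  have h : glCLM (d := d) 1 = 1 := by
    rw [glCLM]; exact map_one _
  rw [h]; rfl

lemma glCLM_ne_zero (g : GLd d) {v : Ed d} (hv : v ≠ 0) : glCLM g v ≠ 0 := by
  intro h
  apply hv
  rw [← glCLM_leftInv g v, h, map_zero]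

lemma continuous_glCLM : Continuous (glCLM : GLd d → _) := by
  have h1 : Continuous (fun A : Matrix (Fin d) (Fin d) ℝ =>
      (Matrix.toEuclideanCLM (𝕜 := ℝ) A : Ed d →L[ℝ] Ed d)) :=
    LinearMap.continuous_of_finiteDimensional
      ((Matrix.toEuclideanCLM (n := Fin d) (𝕜 := ℝ)).toAlgEquiv.toLinearMap)
  exact h1.comp Units.continuous_val

lemma continuous_gapp (v : Ed d) : Continuous (fun g : GLd d => glCLM g v) :=
  continuous_glCLM.clm_apply continuous_const

lemma norm_gapp_le (g : GLd d) (v : Ed d) : ‖glCLM g v‖ ≤ gnorm g * ‖v‖ :=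
  (glCLM g).le_opNorm v

lemma norm_le_gapp (g : GLd d) (v : Ed d) : ‖v‖ ≤ gnorm g⁻¹ * ‖glCLM g v‖ := by
  have := norm_gapp_le g⁻¹ (glCLM g v)
  rwa [glCLM_leftInv] at this

lemma gnorm_nonneg (g : GLd d) : 0 ≤ gnorm g := norm_nonneg _

lemma gnorm_mul_le (g h : GLd d) : gnorm (g * h) ≤ gnorm g * gnorm h := by
  refine ContinuousLinearMap.opNorm_le_bound _ (mul_nonneg (gnorm_nonneg _) (gnorm_nonneg _)) ?_
  intro v
  rw [glCLM_mul, mul_assoc]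
  exact (norm_gapp_le _ _).trans (mul_le_mul_of_nonneg_left (norm_gapp_le _ _) (gnorm_nonneg _))

lemma continuous_gnorm : Continuous (gnorm : GLd d → ℝ) := continuous_glCLM.norm

/-- `g` and its inverse have norm at most `R`. -/
def Bd (R : ℝ) (g : GLd d) : Prop := gnorm g ≤ R ∧ gnorm g⁻¹ ≤ R

lemma exists_Bd (S : Set (GLd d)) (hS : IsCompact S) : ∃ M : ℝ, 1 ≤ M ∧ ∀ g ∈ S, Bd M g := by
  obtain ⟨a, ha⟩ := (hS.image continuous_gnorm).bddAbove
  obtain ⟨b, hb⟩ := (hS.image (continuous_gnorm.comp (continuous_inv (G := GLd d)))).bddAbove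
  refine ⟨max 1 (max a b), le_max_left _ _, fun g hg => ⟨?_, ?_⟩⟩
  · exact (ha ⟨g, hg, rfl⟩).trans ((le_max_left _ _).trans (le_max_right _ _))
  · exact (hb ⟨g, hg, rfl⟩).trans ((le_max_right _ _).trans (le_max_right _ _))

lemma Bd.mul {R T : ℝ} {g h : GLd d} (hg : Bd R g) (hh : Bd T h) : Bd (R * T) (g * h) := by
  have hR : 0 ≤ R := (gnorm_nonneg _).trans hg.1
  have hT : 0 ≤ T := (gnorm_nonneg _).trans hh.1
  refine ⟨(gnorm_mul_le _ _).trans (mul_le_mul hg.1 hh.1 (gnorm_nonneg _) hR), ?_⟩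
  rw [mul_inv_rev, mul_comm R T]
  exact (gnorm_mul_le _ _).trans (mul_le_mul hh.2 hg.2 (gnorm_nonneg _) hT)

lemma Bd.log_le {R : ℝ} {g : GLd d} (hg : Bd R g) {v : Ed d} (hv : v ≠ 0) :
    |Real.log ‖glCLM g v‖ - Real.log ‖v‖| ≤ Real.log R := by
  have h0 : 0 < ‖v‖ := norm_pos_iff.2 hv
  have h1 : 0 < ‖glCLM g v‖ := norm_pos_iff.2 (glCLM_ne_zero g hv)
  have h2 : ‖glCLM g v‖ ≤ R * ‖v‖ := (norm_gapp_le g v).trans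
    (mul_le_mul_of_nonneg_right hg.1 h0.le)
  have h3 : ‖v‖ ≤ R * ‖glCLM g v‖ := (norm_le_gapp g v).trans
    (mul_le_mul_of_nonneg_right hg.2 h1.le)
  have hR : 0 < R := by
    by_contra hR
    nlinarith
  rw [abs_le]
  have e1 := Real.log_le_log h1 h2
  have e2 := Real.log_le_log h0 h3
  rw [Real.log_mul hR.ne' h0.ne'] at e1
  rw [Real.log_mul hR.ne' h1.ne'] at e2
  constructor <;> linarith

/-! ### Part 2: area and projective distance -/

/-- The area of the parallelogram spanned by `p` and `q`. -/
def area (p q : Ed d) : ℝ := Real.sqrt (‖p‖ ^ 2 * ‖q‖ ^ 2 - (inner ℝ p q : ℝ) ^ 2)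

lemma area_nonneg (p q : Ed d) : 0 ≤ area p q := Real.sqrt_nonneg _

lemma area_arg_nonneg (p q : Ed d) : 0 ≤ ‖p‖ ^ 2 * ‖q‖ ^ 2 - (inner ℝ p q : ℝ) ^ 2 := by
  have h := abs_real_inner_le_norm p q
  have := sq_le_sq' (by linarith [neg_abs_le (inner ℝ p q : ℝ), norm_nonneg p, norm_nonneg q])
    ((le_abs_self _).trans h)
  nlinarith

lemma area_le (p q : Ed d) : area p q ≤ ‖p‖ * ‖q‖ := by
  rw [area]
  refine Real.sqrt_le_iff.2 ⟨by positivity, ?_⟩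
  nlinarith [sq_nonneg (inner ℝ p q : ℝ)]

lemma area_smul (a b : ℝ) (p q : Ed d) : area (a • p) (b • q) = |a| * |b| * area p q := by
  rw [area, area, norm_smul, norm_smul, inner_smul_left, inner_smul_right]
  rw [← abs_mul, ← Real.sqrt_sq_eq_abs, ← Real.sqrt_mul (sq_nonneg _)]
  congr 1
  simp only [Real.norm_eq_abs, mul_pow, sq_abs, RCLike.conj_to_real]
  ring

lemma area_add_smul (c : ℝ) (p r : Ed d) : area p (c • p + r) = area p r := by
  rw [area, area]
  congr 1
  rw [norm_add_sq_real, inner_add_right, inner_smul_right, inner_smul_left, norm_smul, mul_pow,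
    real_inner_self_eq_norm_sq, Real.norm_eq_abs, sq_abs]
  simp only [RCLike.conj_to_real]
  ring

lemma continuous_area {X : Type*} [TopologicalSpace X] {f k : X → Ed d} (hf : Continuous f)
    (hk : Continuous k) : Continuous (fun x => area (f x) (k x)) := by
  unfold area
  exact (((hf.norm.pow 2).mul (hk.norm.pow 2)).sub ((hf.inner hk).pow 2)).sqrt

lemma N2_bdd (g : GLd d) : BddAbove { x | ∃ p q : Ed d, ‖p‖ = 1 ∧ ‖q‖ = 1 ∧
    (inner ℝ p q : ℝ) = 0 ∧ x = area (glCLM g p) (glCLM g q) } := by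
  refine ⟨gnorm g ^ 2, ?_⟩
  rintro x ⟨p, q, hp, hq, -, rfl⟩
  have h1 := norm_gapp_le g p
  have h2 := norm_gapp_le g q
  rw [hp, mul_one] at h1
  rw [hq, mul_one] at h2
  refine (area_le _ _).trans ?_
  rw [sq]
  exact mul_le_mul h1 h2 (norm_nonneg _) (gnorm_nonneg _)

lemma N2_eq (g : GLd d) : N2 g = sSup { x | ∃ p q : Ed d, ‖p‖ = 1 ∧ ‖q‖ = 1 ∧
    (inner ℝ p q : ℝ) = 0 ∧ x = area (glCLM g p) (glCLM g q) } := rfl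

lemma N2_nonneg (g : GLd d) : 0 ≤ N2 g := by
  rw [N2_eq]
  apply Real.sSup_nonneg
  rintro x ⟨p, q, hp, hq, -, rfl⟩
  exact area_nonneg _ _

lemma N2_le (g : GLd d) : N2 g ≤ gnorm g ^ 2 := by
  rw [N2_eq]
  apply Real.sSup_le _ (sq_nonneg _)
  rintro x ⟨p, q, hp, hq, -, rfl⟩
  have h1 := norm_gapp_le g p
  have h2 := norm_gapp_le g q
  rw [hp, mul_one] at h1
  rw [hq, mul_one] at h2
  refine (area_le _ _).trans ?_
  rw [sq]
  exact mul_le_mul h1 h2 (norm_nonneg _) (gnorm_nonneg _)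

lemma area_gapp_le (g : GLd d) (p q : Ed d) :
    area (glCLM g p) (glCLM g q) ≤ N2 g * area p q := by
  by_cases hp : p = 0
  · subst hp
    simp [area]
  have hp0 : ‖p‖ ≠ 0 := norm_ne_zero_iff.2 hp
  set c : ℝ := (inner ℝ p q : ℝ) / ‖p‖ ^ 2 with hc
  set r : Ed d := q - c • p with hr
  have hq : q = c • p + r := by rw [hr]; abel
  have hpr : (inner ℝ p r : ℝ) = 0 := by
    rw [hr, inner_sub_right, inner_smul_right, real_inner_self_eq_norm_sq, hc]
    field_simp
    ring
  rw [hq, map_add, map_smul, area_add_smul, area_add_smul]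
  by_cases hr0 : r = 0
  · rw [hr0]; simp [area]
  have hrn : ‖r‖ ≠ 0 := norm_ne_zero_iff.2 hr0
  have e1 : area p r = ‖p‖ * ‖r‖ := by
    rw [area, hpr, ← mul_pow]
    simp [Real.sqrt_sq (mul_nonneg (norm_nonneg p) (norm_nonneg r))]
  have e2 : area (glCLM g (‖p‖⁻¹ • p)) (glCLM g (‖r‖⁻¹ • r)) ≤ N2 g := by
    rw [N2_eq]
    refine le_csSup (N2_bdd g) ⟨_, _, ?_, ?_, ?_, rfl⟩
    · rw [norm_smul, norm_inv, norm_norm, inv_mul_cancel₀ hp0]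
    · rw [norm_smul, norm_inv, norm_norm, inv_mul_cancel₀ hrn]
    · rw [inner_smul_left, inner_smul_right, hpr]; simp
  rw [map_smul, map_smul, area_smul, abs_of_nonneg (by positivity),
    abs_of_nonneg (by positivity)] at e2
  rw [e1]
  calc area (glCLM g p) (glCLM g r)
      = (‖p‖⁻¹ * ‖r‖⁻¹ * area (glCLM g p) (glCLM g r)) * (‖p‖ * ‖r‖) := by field_simp
    _ ≤ _ := mul_le_mul_of_nonneg_right e2 (by positivity)

lemma N2_mul_le (g h : GLd d) : N2 (g * h) ≤ N2 g * N2 h := by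
  rw [N2_eq (g * h)]
  apply Real.sSup_le _ (mul_nonneg (N2_nonneg _) (N2_nonneg _))
  rintro x ⟨p, q, hp, hq, hpq, rfl⟩
  rw [glCLM_mul, glCLM_mul]
  refine (area_gapp_le _ _ _).trans (mul_le_mul_of_nonneg_left ?_ (N2_nonneg _))
  rw [N2_eq]
  exact le_csSup (N2_bdd h) ⟨p, q, hp, hq, hpq, rfl⟩

lemma one_le_N2_one (hd : 2 ≤ d) : 1 ≤ N2 (1 : GLd d) := by
  rw [N2_eq]
  let i : Fin d := ⟨0, by omega⟩
  let j : Fin d := ⟨1, by omega⟩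
  have hij : i ≠ j := by simp [i, j]
  refine le_csSup (N2_bdd 1) ⟨EuclideanSpace.single i 1, EuclideanSpace.single j 1, ?_, ?_, ?_, ?_⟩
  · simp
  · simp
  · simp [EuclideanSpace.inner_single_left, hij]
  · rw [glCLM_one, glCLM_one, area]
    simp [EuclideanSpace.inner_single_left, hij]

lemma one_le_N2_mul (hd : 2 ≤ d) (g : GLd d) : 1 ≤ N2 g * gnorm g⁻¹ ^ 2 := by
  calc (1 : ℝ) ≤ N2 (g * g⁻¹) := by rw [mul_inv_cancel]; exact one_le_N2_one hd
    _ ≤ N2 g * N2 g⁻¹ := N2_mul_le _ _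
    _ ≤ _ := mul_le_mul_of_nonneg_left (N2_le _) (N2_nonneg _)

lemma N2_pos (hd : 2 ≤ d) (g : GLd d) : 0 < N2 g := by
  have := one_le_N2_mul hd g
  rcases (N2_nonneg g).lt_or_eq with h | h
  · exact h
  · rw [← h] at this; norm_num at this

lemma Bd.log_N2 (hd : 2 ≤ d) {R : ℝ} {g : GLd d} (hg : Bd R g) :
    |Real.log (N2 g)| ≤ 2 * Real.log R := by
  have h1 := one_le_N2_mul hd g
  have h2 : N2 g ≤ R ^ 2 := (N2_le g).trans (pow_le_pow_left₀ (gnorm_nonneg _) hg.1 2)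
  have h3 : 1 ≤ N2 g * R ^ 2 := h1.trans
    (mul_le_mul_of_nonneg_left (pow_le_pow_left₀ (gnorm_nonneg _) hg.2 2) (N2_nonneg _))
  have hp := N2_pos hd g
  have hR : R ^ 2 ≠ 0 := by
    intro h; rw [h] at h3; norm_num at h3
  have e1 := Real.log_le_log hp h2
  have e2 := Real.log_nonneg h3
  rw [Real.log_mul hp.ne' hR] at e2
  rw [Real.log_pow] at e1 e2
  push_cast at e1 e2
  rw [abs_le]
  constructor <;> linarith

lemma measurable_N2 : Measurable (N2 : GLd d → ℝ) := by
  apply LowerSemicontinuous.measurable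
  intro g a ha
  by_cases hne : { x | ∃ p q : Ed d, ‖p‖ = 1 ∧ ‖q‖ = 1 ∧
    (inner ℝ p q : ℝ) = 0 ∧ x = area (glCLM g p) (glCLM g q) }.Nonempty
  · rw [N2_eq] at ha
    obtain ⟨x, ⟨p, q, hp, hq, hpq, rfl⟩, hx⟩ := exists_lt_of_lt_csSup hne ha
    have hcont : Continuous (fun g : GLd d => area (glCLM g p) (glCLM g q)) :=
      continuous_area (continuous_gapp p) (continuous_gapp q)
    filter_upwards [hcont.continuousAt.eventually (lt_mem_nhds hx)] with g' hg'
    refine lt_of_lt_of_le hg' ?_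
    rw [N2_eq]
    exact le_csSup (N2_bdd g') ⟨p, q, hp, hq, hpq, rfl⟩
  · have : N2 g = 0 := by
      rw [N2_eq, Set.not_nonempty_iff_eq_empty.1 hne, Real.sSup_empty]
    rw [this] at ha
    exact Eventually.of_forall (fun g' => lt_of_lt_of_le ha (N2_nonneg g'))

lemma pdelta_eq_area (x y : Pd d) : pdelta x y = area x.rep y.rep / (‖x.rep‖ * ‖y.rep‖) := rfl

lemma pdelta_mk (v w : Ed d) (hv : v ≠ 0) (hw : w ≠ 0) :
    pdelta (Projectivization.mk ℝ v hv) (Projectivization.mk ℝ w hw)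
      = area v w / (‖v‖ * ‖w‖) := by
  obtain ⟨a, ha⟩ := Projectivization.exists_smul_eq_mk_rep ℝ v hv
  obtain ⟨b, hb⟩ := Projectivization.exists_smul_eq_mk_rep ℝ w hw
  rw [pdelta_eq_area, ← ha, ← hb]
  have ha' : (a : ℝ) ≠ 0 := a.ne_zero
  have hb' : (b : ℝ) ≠ 0 := b.ne_zero
  have hv' := norm_ne_zero_iff.2 hv
  have hw' := norm_ne_zero_iff.2 hw
  rw [Units.smul_def, Units.smul_def, area_smul, norm_smul, norm_smul, Real.norm_eq_abs,
    Real.norm_eq_abs]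
  have haQ := abs_ne_zero.2 ha'
  have hbQ := abs_ne_zero.2 hb'
  field_simp

lemma pact_mk (g : GLd d) (v : Ed d) (hv : v ≠ 0) :
    pact g (Projectivization.mk ℝ v hv) = Projectivization.mk ℝ (glCLM g v) (glCLM_ne_zero g hv) :=
  rfl

lemma pact_mul (g h : GLd d) (x : Pd d) : pact (g * h) x = pact g (pact h x) := by
  induction x using Projectivization.ind with
  | h v hv =>
    rw [pact_mk, pact_mk, pact_mk]
    congr 1
    exact glCLM_mul g h v

lemma pact_one (x : Pd d) : pact (1 : GLd d) x = x := by
  induction x using Projectivization.ind with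
  | h v hv =>
    rw [pact_mk]
    congr 1
    exact glCLM_one v

lemma pdelta_nonneg (x y : Pd d) : 0 ≤ pdelta x y :=
  div_nonneg (area_nonneg _ _) (by positivity)

lemma pdelta_le_one (x y : Pd d) : pdelta x y ≤ 1 :=
  div_le_one_of_le₀ (area_le _ _) (by positivity)

lemma pdelta_self (x : Pd d) : pdelta x x = 0 := by
  rw [pdelta_eq_area, area, real_inner_self_eq_norm_sq]
  simp [← sq]

lemma eq_of_pdelta (x y : Pd d) (h : pdelta x y = 0) : x = y := by
  have hx := norm_ne_zero_iff.2 x.rep_nonzero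
  have hy := norm_ne_zero_iff.2 y.rep_nonzero
  rw [pdelta_eq_area, div_eq_zero_iff, or_iff_left (mul_ne_zero hx hy), area,
    Real.sqrt_eq_zero (area_arg_nonneg _ _)] at h
  have h2 : ‖(inner ℝ x.rep y.rep : ℝ)‖ = ‖x.rep‖ * ‖y.rep‖ := by
    rw [Real.norm_eq_abs]
    rw [← abs_of_nonneg (mul_nonneg (norm_nonneg x.rep) (norm_nonneg y.rep)), ← sq_eq_sq_iff_abs_eq_abs]
    linarith [mul_pow ‖x.rep‖ ‖y.rep‖ 2]
  have h3 := (norm_inner_eq_norm_tfae ℝ x.rep y.rep).out 0 2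
  rcases h3.1 h2 with h4 | ⟨r, hr⟩
  · exact absurd h4 x.rep_nonzero
  · rw [← x.mk_rep, ← y.mk_rep, eq_comm, Projectivization.mk_eq_mk_iff']
    exact ⟨r, hr.symm⟩

lemma continuous_pdelta_pact (x y : Pd d) (k : GLd d → Ed d) (hk : Continuous k)
    (hk0 : ∀ g, k g ≠ 0) : Continuous (fun g : GLd d =>
      pdelta (pact g x) (Projectivization.mk ℝ (k g) (hk0 g))) := by
  induction x using Projectivization.ind with
  | h v hv =>
    simp only [pact_mk, pdelta_mk]
    refine (continuous_area (continuous_gapp v) hk).div ((continuous_gapp v).norm.mul hk.norm) ?_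
    intro g
    exact mul_ne_zero (norm_ne_zero_iff.2 (glCLM_ne_zero g hv)) (norm_ne_zero_iff.2 (hk0 g))

lemma continuous_pdelta_pact₂ (x y : Pd d) : Continuous (fun g : GLd d =>
      pdelta (pact g x) (pact g y)) := by
  induction y using Projectivization.ind with
  | h w hw => exact continuous_pdelta_pact x x _ (continuous_gapp w) (fun g => glCLM_ne_zero g hw)

lemma continuous_pdelta_pact₁ (x z : Pd d) : Continuous (fun g : GLd d =>
      pdelta (pact g x) z) := by
  induction z using Projectivization.ind with
  | h w hw => exact continuous_pdelta_pact x x _ continuous_const (fun g => hw)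

/-- The main pointwise estimate. -/
lemma pdelta_pact_le (g : GLd d) (v w : Ed d) (hv : v ≠ 0) (hw : w ≠ 0) :
    pdelta (pact g (Projectivization.mk ℝ v hv)) (pact g (Projectivization.mk ℝ w hw)) ≤
      N2 g * (‖v‖ / ‖glCLM g v‖) * (‖w‖ / ‖glCLM g w‖) *
      pdelta (Projectivization.mk ℝ v hv) (Projectivization.mk ℝ w hw) := by
  rw [pact_mk, pact_mk, pdelta_mk, pdelta_mk]
  have hv' := norm_ne_zero_iff.2 hv
  have hw' := norm_ne_zero_iff.2 hw
  have hvQ := norm_ne_zero_iff.2 (glCLM_ne_zero g hv)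
  have hwQ := norm_ne_zero_iff.2 (glCLM_ne_zero g hw)
  have := area_gapp_le g v w
  calc area (glCLM g v) (glCLM g w) / (‖glCLM g v‖ * ‖glCLM g w‖)
      ≤ (N2 g * area v w) / (‖glCLM g v‖ * ‖glCLM g w‖) := by gcongr
    _ = _ := by field_simp

lemma Bd.pdelta_le {R : ℝ} {g : GLd d} (hg : Bd R g) (x y : Pd d) :
    pdelta (pact g x) (pact g y) ≤ R ^ 4 * pdelta x y := by
  induction x using Projectivization.ind with
  | h v hv =>
  induction y using Projectivization.ind with
  | h w hw =>
    refine (pdelta_pact_le g v w hv hw).trans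
      (mul_le_mul_of_nonneg_right ?_ (pdelta_nonneg _ _))
    have hR : 0 ≤ R := (gnorm_nonneg _).trans hg.1
    have hvQ := norm_pos_iff.2 (glCLM_ne_zero g hv)
    have hwQ := norm_pos_iff.2 (glCLM_ne_zero g hw)
    have h1 : ‖v‖ / ‖glCLM g v‖ ≤ R := by
      rw [div_le_iff₀ hvQ]
      exact (norm_le_gapp g v).trans (mul_le_mul_of_nonneg_right hg.2 hvQ.le)
    have h2 : ‖w‖ / ‖glCLM g w‖ ≤ R := by
      rw [div_le_iff₀ hwQ]
      exact (norm_le_gapp g w).trans (mul_le_mul_of_nonneg_right hg.2 hwQ.le)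
    have h3 : N2 g ≤ R ^ 2 := (N2_le g).trans (pow_le_pow_left₀ (gnorm_nonneg _) hg.1 2)
    calc N2 g * (‖v‖ / ‖glCLM g v‖) * (‖w‖ / ‖glCLM g w‖)
        ≤ R ^ 2 * R * R := by gcongr
      _ = R ^ 4 := by ring


/-! ### Part 3: convolution powers -/

lemma mconv_eq (μ ν : Measure (GLd d)) : mconv μ ν = Measure.mconv μ ν := rfl

instance instProbN (μ : Measure (GLd d)) [IsProbabilityMeasure μ] (n : ℕ) :
    IsProbabilityMeasure (mconvN μ n) := by
  induction n with
  | zero => rw [mconvN]; infer_instance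
  | succ n ih =>
    rw [mconvN]
    split_ifs
    · infer_instance
    · rw [mconv]
      exact Measure.isProbabilityMeasure_map (by fun_prop)

lemma mconvN_succ (μ : Measure (GLd d)) [IsProbabilityMeasure μ] (n : ℕ) :
    mconvN μ (n + 1) = mconv (mconvN μ n) μ := by
  rw [mconvN]
  split_ifs with h
  · subst h
    rw [mconvN, mconv_eq, Measure.dirac_one_mconv]
  · rfl

lemma mconvN_one (μ : Measure (GLd d)) : mconvN μ 1 = μ := by
  simp [mconvN]

lemma mconvN_add (μ : Measure (GLd d)) [IsProbabilityMeasure μ] (n m : ℕ) :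
    mconvN μ (n + m) = mconv (mconvN μ n) (mconvN μ m) := by
  induction m with
  | zero => rw [add_zero, mconvN.eq_1, mconv_eq, Measure.mconv_dirac_one]
  | succ m ih =>
    rw [← add_assoc, mconvN_succ, ih, mconvN_succ, mconv_eq, mconv_eq, mconv_eq, mconv_eq,
      Measure.mconv_assoc]

lemma ae_mconv {μ ν : Measure (GLd d)} [IsProbabilityMeasure μ] [IsProbabilityMeasure ν]
    {p q r : GLd d → Prop} (hr : MeasurableSet {g | r g}) (hp : ∀ᵐ g ∂μ, p g)
    (hq : ∀ᵐ g ∂ν, q g) (h : ∀ g k, p g → q k → r (g * k)) : ∀ᵐ g ∂(mconv μ ν), r g := by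
  rw [mconv, ae_map_iff (by fun_prop) hr]
  have h1 : ∀ᵐ z ∂(μ.prod ν), p z.1 := Measure.quasiMeasurePreserving_fst.ae hp
  have h2 : ∀ᵐ z ∂(μ.prod ν), q z.2 := Measure.quasiMeasurePreserving_snd.ae hq
  filter_upwards [h1, h2] with z hz1 hz2
  exact h _ _ hz1 hz2

lemma measurableSet_Bd (R : ℝ) : MeasurableSet {g : GLd d | Bd R g} := by
  have h : IsClosed {g : GLd d | Bd R g} := by
    have h1 : IsClosed {g : GLd d | gnorm g ≤ R} := isClosed_le continuous_gnorm continuous_const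
    have h2 : IsClosed {g : GLd d | gnorm g⁻¹ ≤ R} :=
      isClosed_le (continuous_gnorm.comp continuous_inv) continuous_const
    exact h1.inter h2
  exact h.measurableSet

lemma gnorm_one_le : gnorm (1 : GLd d) ≤ 1 := by
  refine ContinuousLinearMap.opNorm_le_bound _ zero_le_one ?_
  intro v
  rw [glCLM_one, one_mul]

lemma ae_Bd {μ : Measure (GLd d)} [IsProbabilityMeasure μ] {M : ℝ}
    (hμ : ∀ᵐ g ∂μ, Bd M g) (n : ℕ) : ∀ᵐ g ∂(mconvN μ n), Bd (M ^ n) g := by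
  induction n with
  | zero =>
    rw [mconvN, ae_dirac_iff (measurableSet_Bd _), pow_zero]
    exact ⟨gnorm_one_le, by rw [inv_one]; exact gnorm_one_le⟩
  | succ n ih =>
    rw [mconvN_succ]
    exact ae_mconv (measurableSet_Bd _) ih hμ (fun g k hg hk => by
      rw [pow_succ]; exact hg.mul hk)

lemma lintegral_mconvN (μ : Measure (GLd d)) [IsProbabilityMeasure μ] (n m : ℕ)
    {F : GLd d → ENNReal} (hF : Measurable F) :
    ∫⁻ g, F g ∂(mconvN μ (n + m)) = ∫⁻ h, ∫⁻ g, F (g * h) ∂(mconvN μ n) ∂(mconvN μ m) := by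
  rw [mconvN_add, mconv, lintegral_map hF (by fun_prop)]
  exact lintegral_prod_symm' _ (hF.comp (by fun_prop))

lemma integrable_of_bdd {ν : Measure (GLd d)} [IsProbabilityMeasure ν] {F : GLd d → ℝ}
    (hF : Measurable F) {C : ℝ} (hC : ∀ᵐ g ∂ν, |F g| ≤ C) : Integrable F ν :=
  Integrable.of_bound hF.aestronglyMeasurable C hC

lemma integrable_mconvN (μ : Measure (GLd d)) [IsProbabilityMeasure μ] (n m : ℕ)
    {F : GLd d → ℝ} (hF : Measurable F) {C : ℝ} (hC : ∀ᵐ g ∂(mconvN μ (n + m)), |F g| ≤ C) :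
    Integrable (fun z : GLd d × GLd d => F (z.1 * z.2)) ((mconvN μ n).prod (mconvN μ m)) := by
  have h := integrable_of_bdd hF hC
  rw [mconvN_add, mconv] at h
  exact h.comp_measurable (by fun_prop)

lemma integral_mconvN (μ : Measure (GLd d)) [IsProbabilityMeasure μ] (n m : ℕ)
    {F : GLd d → ℝ} (hF : Measurable F) {C : ℝ} (hC : ∀ᵐ g ∂(mconvN μ (n + m)), |F g| ≤ C) :
    ∫ g, F g ∂(mconvN μ (n + m)) = ∫ h, ∫ g, F (g * h) ∂(mconvN μ n) ∂(mconvN μ m) := by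
  have h := integrable_mconvN μ n m hF hC
  rw [mconvN_add, mconv, integral_map (by fun_prop) hF.aestronglyMeasurable]
  exact integral_prod_symm _ h

/-- Fekete for subadditive cocycles. -/
lemma fekete (μ : Measure (GLd d)) [IsProbabilityMeasure μ] {f : GLd d → ℝ} (hf : Measurable f)
    {B : ℝ} (hB : ∀ n : ℕ, ∀ᵐ g ∂(mconvN μ n), |f g| ≤ n * B)
    (hsub : ∀ m : ℕ, ∀ᵐ h ∂(mconvN μ m), ∀ g, f (g * h) ≤ f g + f h) :
    ∃ l, Tendsto (fun n : ℕ => (n : ℝ)⁻¹ * ∫ g, f g ∂(mconvN μ n)) atTop (nhds l) := by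
  have hfInt : ∀ n, Integrable f (mconvN μ n) := fun n => integrable_of_bdd hf (hB n)
  have hs : Subadditive (fun n : ℕ => ∫ g, f g ∂(mconvN μ n)) := by
    intro n m
    dsimp only
    have h1 := integrable_mconvN μ n m hf (hB (n + m))
    rw [integral_mconvN μ n m hf (hB (n + m))]
    calc ∫ h, ∫ g, f (g * h) ∂(mconvN μ n) ∂(mconvN μ m)
        ≤ ∫ h, ((∫ g, f g ∂(mconvN μ n)) + f h) ∂(mconvN μ m) := by
          apply integral_mono_ae h1.integral_prod_right ((integrable_const _).add (hfInt m))
          filter_upwards [hsub m, h1.prod_left_ae] with h hh hi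
          calc ∫ g, f (g * h) ∂(mconvN μ n) ≤ ∫ g, (f g + f h) ∂(mconvN μ n) :=
                integral_mono hi ((hfInt n).add (integrable_const _)) hh
            _ = _ := by
                rw [integral_add (hfInt n) (integrable_const _)]; simp
      _ = _ := by
          rw [integral_add (integrable_const _) (hfInt m)]; simp
  have hbd : BddBelow (Set.range fun n : ℕ => (∫ g, f g ∂(mconvN μ n)) / n) := by
    refine ⟨-|B|, ?_⟩
    rintro _ ⟨n, rfl⟩
    have h1 : |∫ g, f g ∂(mconvN μ n)| ≤ n * B := by
      have := norm_integral_le_of_norm_le_const (f := f) (μ := mconvN μ n) (C := n * B) (hB n)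
      simpa using this
    dsimp only
    rcases Nat.eq_zero_or_pos n with h0 | h0
    · subst h0; simp
    · have hn : (0 : ℝ) < n := by exact_mod_cast h0
      rw [le_div_iff₀ hn]
      have := (abs_le.1 h1).1
      nlinarith [le_abs_self B]
  refine ⟨hs.lim, ?_⟩
  have := hs.tendsto_lim hbd
  simpa [div_eq_inv_mul] using this

/-- Second order expansion of exponential moments. -/
lemma exp_moment {ν : Measure (GLd d)} [IsProbabilityMeasure ν] {X : GLd d → ℝ}
    (hX : Measurable X) {B c s : ℝ} (hB : ∀ᵐ g ∂ν, |X g| ≤ B) (hc : ∫ g, X g ∂ν ≤ -c)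
    (hs : 0 ≤ s) (hsB : s * B ≤ 1) :
    ∫⁻ g, ENNReal.ofReal (Real.exp (s * X g)) ∂ν ≤ ENNReal.ofReal (1 - s * c + s ^ 2 * B ^ 2) := by
  have hfInt := integrable_of_bdd hX hB
  have hpt : ∀ᵐ g ∂ν, Real.exp (s * X g) ≤ 1 + s * X g + s ^ 2 * B ^ 2 := by
    filter_upwards [hB] with g hg
    have h1 : |s * X g| ≤ 1 := by
      rw [abs_mul, abs_of_nonneg hs]
      exact (mul_le_mul_of_nonneg_left hg hs).trans hsB
    have h2 := (abs_le.1 (Real.abs_exp_sub_one_sub_id_le h1)).2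
    have h3 : (s * X g) ^ 2 ≤ s ^ 2 * B ^ 2 := by
      rw [mul_pow]
      exact mul_le_mul_of_nonneg_left (sq_le_sq' (by linarith [(abs_le.1 hg).1]) (abs_le.1 hg).2)
        (sq_nonneg _)
    linarith
  have hm : Measurable (fun g => Real.exp (s * X g)) := (hX.const_mul s).exp
  have hI : Integrable (fun g => 1 + s * X g + s ^ 2 * B ^ 2) ν :=
    ((integrable_const _).add (hfInt.const_mul s)).add (integrable_const _)
  have hE : Integrable (fun g => Real.exp (s * X g)) ν :=
    hI.mono' hm.aestronglyMeasurable (by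
      filter_upwards [hpt] with g hg
      rwa [Real.norm_eq_abs, abs_of_pos (Real.exp_pos _)])
  rw [← ofReal_integral_eq_lintegral_ofReal hE (Eventually.of_forall fun g => (Real.exp_pos _).le)]
  apply ENNReal.ofReal_le_ofReal
  refine (integral_mono_ae hE hI hpt).trans ?_
  have h1 : Integrable (fun g => 1 + s * X g) ν := (integrable_const _).add (hfInt.const_mul s)
  rw [integral_add h1 (integrable_const _),
    integral_add (integrable_const _) (hfInt.const_mul s), integral_const_mul]
  simp only [integral_const, probReal_univ, smul_eq_mul, one_mul]
  nlinarith


/-! ### Part 4: the averaged log-growth -/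

/-- The averaged logarithmic growth of the vector `v`. -/
def Aav (μ : Measure (GLd d)) (n : ℕ) (v : Ed d) : ℝ :=
  ∫ g, Real.log ‖glCLM g v‖ ∂(mconvN μ n)

lemma measurable_lognorm (v : Ed d) : Measurable (fun g : GLd d => Real.log ‖glCLM g v‖) :=
  (continuous_gapp v).norm.measurable.log

lemma ae_lognorm {μ : Measure (GLd d)} [IsProbabilityMeasure μ] {M : ℝ}
    (hμ : ∀ᵐ g ∂μ, Bd M g) (n : ℕ) {v : Ed d} (hv : v ≠ 0) :
    ∀ᵐ g ∂(mconvN μ n), |Real.log ‖glCLM g v‖ - Real.log ‖v‖| ≤ n * Real.log M := by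
  filter_upwards [ae_Bd hμ n] with g hg
  have := hg.log_le hv
  rwa [Real.log_pow] at this

lemma ae_lognorm' {μ : Measure (GLd d)} [IsProbabilityMeasure μ] {M : ℝ}
    (hμ : ∀ᵐ g ∂μ, Bd M g) (n : ℕ) {v : Ed d} (hv : v ≠ 0) :
    ∀ᵐ g ∂(mconvN μ n), |Real.log ‖glCLM g v‖| ≤ n * Real.log M + |Real.log ‖v‖| := by
  filter_upwards [ae_lognorm hμ n hv] with g hg
  have := abs_add_le (Real.log ‖glCLM g v‖ - Real.log ‖v‖) (Real.log ‖v‖)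
  rw [sub_add_cancel] at this
  linarith

lemma integrable_lognorm {μ : Measure (GLd d)} [IsProbabilityMeasure μ] {M : ℝ}
    (hμ : ∀ᵐ g ∂μ, Bd M g) (n : ℕ) {v : Ed d} (hv : v ≠ 0) :
    Integrable (fun g => Real.log ‖glCLM g v‖) (mconvN μ n) :=
  integrable_of_bdd (measurable_lognorm v) (ae_lognorm' hμ n hv)

lemma Aav_bound {μ : Measure (GLd d)} [IsProbabilityMeasure μ] {M : ℝ}
    (hμ : ∀ᵐ g ∂μ, Bd M g) (n : ℕ) {v : Ed d} (hv : v ≠ 0) :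
    |Aav μ n v - Real.log ‖v‖| ≤ n * Real.log M := by
  have h := norm_integral_le_of_norm_le_const (f := fun g => Real.log ‖glCLM g v‖ - Real.log ‖v‖)
    (ae_lognorm hμ n hv)
  rw [integral_sub (integrable_lognorm hμ n hv) (integrable_const _)] at h
  simpa [Aav] using h

lemma Aav_smul {μ : Measure (GLd d)} [IsProbabilityMeasure μ] {M : ℝ}
    (hμ : ∀ᵐ g ∂μ, Bd M g) (n : ℕ) {v : Ed d} (hv : v ≠ 0) {c : ℝ} (hc : c ≠ 0) :
    Aav μ n (c • v) = Real.log |c| + Aav μ n v := by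
  have h : ∀ g : GLd d, Real.log ‖glCLM g (c • v)‖ = Real.log |c| + Real.log ‖glCLM g v‖ := by
    intro g
    rw [map_smul, norm_smul, Real.norm_eq_abs, Real.log_mul (abs_ne_zero.2 hc)
      (norm_ne_zero_iff.2 (glCLM_ne_zero g hv))]
  simp only [Aav, h]
  rw [integral_add (integrable_const _) (integrable_lognorm hμ n hv)]
  simp

/-- Normalised vector. -/
def unit (v : Ed d) : Ed d := ‖v‖⁻¹ • v

lemma norm_unit {v : Ed d} (hv : v ≠ 0) : ‖unit v‖ = 1 := by
  rw [unit, norm_smul, norm_inv, norm_norm, inv_mul_cancel₀ (norm_ne_zero_iff.2 hv)]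

lemma Aav_unit {μ : Measure (GLd d)} [IsProbabilityMeasure μ] {M : ℝ}
    (hμ : ∀ᵐ g ∂μ, Bd M g) (n : ℕ) {v : Ed d} (hv : v ≠ 0) :
    Aav μ n v = Aav μ n (unit v) + Real.log ‖v‖ := by
  rw [unit, Aav_smul hμ n hv (inv_ne_zero (norm_ne_zero_iff.2 hv)), abs_inv, abs_norm, Real.log_inv]
  ring

lemma Aav_add {μ : Measure (GLd d)} [IsProbabilityMeasure μ] {M : ℝ}
    (hμ : ∀ᵐ g ∂μ, Bd M g) (n m : ℕ) {v : Ed d} (hv : v ≠ 0) :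
    Integrable (fun h => Aav μ n (glCLM h v)) (mconvN μ m) ∧
    Aav μ (n + m) v = ∫ h, Aav μ n (glCLM h v) ∂(mconvN μ m) := by
  have h1 := integrable_mconvN μ n m (measurable_lognorm v) (ae_lognorm' hμ (n + m) hv)
  have h2 := integral_mconvN μ n m (measurable_lognorm v) (ae_lognorm' hμ (n + m) hv)
  simp only [glCLM_mul] at h1 h2
  exact ⟨h1.integral_prod_right, h2⟩

/-- If `A_n ≥ a` on unit vectors then `A_{n+m}(v) ≥ a + A_m(v)`. -/
lemma Aav_add_ge {μ : Measure (GLd d)} [IsProbabilityMeasure μ] {M : ℝ}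
    (hμ : ∀ᵐ g ∂μ, Bd M g) (n m : ℕ) {a : ℝ} (ha : ∀ v : Ed d, ‖v‖ = 1 → a ≤ Aav μ n v)
    {v : Ed d} (hv : v ≠ 0) : a + Aav μ m v ≤ Aav μ (n + m) v := by
  obtain ⟨h1, h2⟩ := Aav_add hμ n m hv
  rw [h2]
  have : a + Aav μ m v = ∫ h, (a + Real.log ‖glCLM h v‖) ∂(mconvN μ m) := by
    rw [integral_add (integrable_const _) (integrable_lognorm hμ m hv)]
    simp [Aav]
  rw [this]
  apply integral_mono ((integrable_const _).add (integrable_lognorm hμ m hv)) h1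
  intro h
  change a + Real.log ‖glCLM h v‖ ≤ Aav μ n (glCLM h v)
  rw [Aav_unit hμ n (glCLM_ne_zero h hv)]
  have := ha _ (norm_unit (glCLM_ne_zero h hv))
  linarith

lemma continuousOn_Aav {μ : Measure (GLd d)} [IsProbabilityMeasure μ] {M : ℝ}
    (hμ : ∀ᵐ g ∂μ, Bd M g) (n : ℕ) :
    ContinuousOn (Aav μ n) (Metric.sphere (0 : Ed d) 1) := by
  intro v hv
  have hne : ∀ w ∈ Metric.sphere (0 : Ed d) 1, w ≠ 0 := by
    intro w hw h0
    rw [h0] at hw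
    simp at hw
  unfold Aav
  apply continuousWithinAt_of_dominated (bound := fun _ => n * Real.log M)
  · exact Eventually.of_forall fun w => (measurable_lognorm w).aestronglyMeasurable
  · filter_upwards [self_mem_nhdsWithin] with w hw
    filter_upwards [ae_lognorm hμ n (hne w hw)] with g hg
    have : ‖w‖ = 1 := by simpa using hw
    rw [this] at hg
    simpa using hg
  · exact integrable_const _
  · refine Eventually.of_forall fun g => ?_
    apply ContinuousAt.continuousWithinAt
    exact ((glCLM g).continuous.norm.continuousAt).log
      (norm_ne_zero_iff.2 (glCLM_ne_zero g (hne v hv)))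

/-- The infimum of `A_n` over the unit sphere. -/
def ainf (μ : Measure (GLd d)) (n : ℕ) : ℝ := sInf (Aav μ n '' Metric.sphere (0 : Ed d) 1)

lemma sphere_nonempty (hd : 2 ≤ d) : (Metric.sphere (0 : Ed d) 1).Nonempty :=
  ⟨EuclideanSpace.single ⟨0, by omega⟩ 1, by simp⟩

lemma ainf_le {μ : Measure (GLd d)} [IsProbabilityMeasure μ] {M : ℝ}
    (hμ : ∀ᵐ g ∂μ, Bd M g) (n : ℕ) {v : Ed d} (hv : ‖v‖ = 1) : ainf μ n ≤ Aav μ n v := by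
  apply csInf_le
  · exact ((isCompact_sphere (0 : Ed d) 1).image_of_continuousOn (continuousOn_Aav hμ n)).bddBelow
  · exact ⟨v, by simpa using hv, rfl⟩

lemma le_ainf (hd : 2 ≤ d) {μ : Measure (GLd d)} {n : ℕ} {a : ℝ}
    (ha : ∀ v : Ed d, ‖v‖ = 1 → a ≤ Aav μ n v) : a ≤ ainf μ n := by
  apply le_csInf ((sphere_nonempty hd).image _)
  rintro _ ⟨v, hv, rfl⟩
  exact ha v (by simpa using hv)

lemma norm_one_ne {v : Ed d} (hv : ‖v‖ = 1) : v ≠ 0 := by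
  intro h; rw [h] at hv; simp at hv

/-- Existence of the minimal growth rate `β`. -/
lemma exists_beta (hd : 2 ≤ d) {μ : Measure (GLd d)} [IsProbabilityMeasure μ] {M : ℝ}
    (hμ : ∀ᵐ g ∂μ, Bd M g) : ∃ β : ℝ, (∀ n : ℕ, 1 ≤ n → ainf μ n ≤ n * β) ∧
      Tendsto (fun n : ℕ => ainf μ n / n) atTop (nhds β) := by
  have hs : Subadditive (fun n => - ainf μ n) := by
    intro n m
    have : ainf μ n + ainf μ m ≤ ainf μ (n + m) := by
      apply le_ainf hd
      intro v hv
      have h1 := Aav_add_ge hμ n m (fun v hv => ainf_le hμ n hv) (norm_one_ne hv)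
      have h2 := ainf_le hμ m hv
      linarith
    dsimp only
    linarith
  have hbd : BddBelow (Set.range fun n : ℕ => (- ainf μ n) / n) := by
    refine ⟨-|Real.log M|, ?_⟩
    rintro _ ⟨n, rfl⟩
    dsimp only
    rcases Nat.eq_zero_or_pos n with h0 | h0
    · subst h0; simp
    · have hn : (0 : ℝ) < n := by exact_mod_cast h0
      rw [le_div_iff₀ hn]
      obtain ⟨v, hv⟩ := sphere_nonempty hd
      have hv1 : ‖v‖ = 1 := by simpa using hv
      have h1 := ainf_le hμ n hv1
      have h2 := (abs_le.1 (Aav_bound hμ n (norm_one_ne hv1))).2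
      rw [hv1, Real.log_one] at h2
      nlinarith [le_abs_self (Real.log M)]
  refine ⟨-hs.lim, ?_, ?_⟩
  · intro n hn
    have h := hs.lim_le_div hbd (n := n) (by omega)
    have hn : (0 : ℝ) < n := by exact_mod_cast hn
    rw [le_div_iff₀ hn] at h
    linarith
  · have := (hs.tendsto_lim hbd).neg
    refine this.congr ?_
    intro n
    ring

/-- There is a single vector with minimal growth for all times. -/
lemma exists_minimal (hd : 2 ≤ d) {μ : Measure (GLd d)} [IsProbabilityMeasure μ] {M : ℝ}
    (hM : 1 ≤ M) (hμ : ∀ᵐ g ∂μ, Bd M g) {β : ℝ}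
    (hβ : Tendsto (fun n : ℕ => ainf μ n / n) atTop (nhds β)) :
    ∃ v : Ed d, ‖v‖ = 1 ∧ ∀ n : ℕ, 1 ≤ n → Aav μ n v ≤ n * β := by
  by_contra! hcon
  have hne : ∀ {w : Ed d}, ‖w‖ = 1 → w ≠ 0 := norm_one_ne
  -- finite stopping rule
  have key : ∃ N : ℕ, ∃ ε : ℝ, 0 < ε ∧ ∀ v : Ed d, ‖v‖ = 1 →
      ∃ n : ℕ, 1 ≤ n ∧ n ≤ N ∧ n * (β + ε) ≤ Aav μ n v := by
    have hc := isCompact_sphere (0 : Ed d) 1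
    obtain ⟨N, ε, hε, h⟩ := hc.induction_on (p := fun s => ∃ N : ℕ, ∃ ε : ℝ, 0 < ε ∧ ∀ v ∈ s, ‖v‖ = 1 →
      ∃ n : ℕ, 1 ≤ n ∧ n ≤ N ∧ n * (β + ε) ≤ Aav μ n v)
      ⟨0, 1, one_pos, by simp⟩
      (by
        rintro s t hst ⟨N, ε, hε, h⟩
        exact ⟨N, ε, hε, fun v hv => h v (hst hv)⟩)
      (by
        rintro s t ⟨N, ε, hε, h⟩ ⟨N', ε', hε', h'⟩
        refine ⟨max N N', min ε ε', lt_min hε hε', ?_⟩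
        rintro v (hv | hv) h1
        · obtain ⟨n, a, b, c⟩ := h v hv h1
          refine ⟨n, a, b.trans (le_max_left _ _), le_trans ?_ c⟩
          gcongr
          exact min_le_left _ _
        · obtain ⟨n, a, b, c⟩ := h' v hv h1
          refine ⟨n, a, b.trans (le_max_right _ _), le_trans ?_ c⟩
          gcongr
          exact min_le_right _ _)
      (by
        intro v hv
        have hv1 : ‖v‖ = 1 := by simpa using hv
        obtain ⟨n, hn, hlt⟩ := hcon v hv1
        have hn0 : (0 : ℝ) < n := by exact_mod_cast hn
        obtain ⟨b, hb1, hb2⟩ := exists_between hlt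
        have hmem := (continuousOn_Aav hμ n v hv).eventually (lt_mem_nhds hb2)
        refine ⟨_, hmem, n, b / n - β, ?_, ?_⟩
        · rw [sub_pos, lt_div_iff₀ hn0]; linarith
        · intro w hw _
          refine ⟨n, hn, le_rfl, ?_⟩
          have : b < Aav μ n w := hw
          have e : n * (β + (b / n - β)) = b := by field_simp; ring
          rw [e]; exact this.le)
    exact ⟨N, ε, hε, fun v hv => h v (by simpa using hv) hv⟩
  obtain ⟨N, ε, hε, h⟩ := key
  have hlM : 0 ≤ Real.log M := Real.log_nonneg hM
  set C : ℝ := N * (|β + ε| + Real.log M) with hC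
  have hlow : ∀ n : ℕ, ∀ v : Ed d, ‖v‖ = 1 → n * (β + ε) - C ≤ Aav μ n v := by
    intro n
    induction n using Nat.strong_induction_on with
    | _ n ih =>
      intro v hv
      by_cases hnN : n ≤ N
      · have h1 := (abs_le.1 (Aav_bound hμ n (hne hv))).1
        rw [hv, Real.log_one] at h1
        have h2 : (n : ℝ) ≤ N := by exact_mod_cast hnN
        have h3 : (n : ℝ) * (β + ε) ≤ N * |β + ε| :=
          calc (n : ℝ) * (β + ε) ≤ n * |β + ε| :=
                mul_le_mul_of_nonneg_left (le_abs_self _) (Nat.cast_nonneg _)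
            _ ≤ _ := by gcongr
        have h4 : (n : ℝ) * Real.log M ≤ N * Real.log M := by gcongr
        linarith
      · obtain ⟨k, hk1, hk2, hk3⟩ := h v hv
        have := Aav_add_ge hμ (n - k) k (ih (n - k) (by omega)) (hne hv)
        rw [Nat.sub_add_cancel (by omega), Nat.cast_sub (by omega)] at this
        linarith
  have hlim : β + ε ≤ β := by
    have h1 : Tendsto (fun n : ℕ => (β + ε) - C / n) atTop (nhds ((β + ε) - 0)) :=
      tendsto_const_nhds.sub (tendsto_const_div_atTop_nhds_zero_nat C)
    rw [sub_zero] at h1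
    refine le_of_tendsto_of_tendsto h1 hβ ?_
    filter_upwards [eventually_ge_atTop 1] with n hn
    have hn0 : (0 : ℝ) < n := by exact_mod_cast hn
    have := le_ainf hd (hlow n)
    rw [le_div_iff₀ hn0]
    have e : (β + ε - C / n) * n = n * (β + ε) - C := by field_simp
    linarith
  linarith


/-! ### Part 5: lower tails -/

lemma lower_moment {μ : Measure (GLd d)} [IsProbabilityMeasure μ] {M : ℝ}
    (hM : 1 ≤ M) (hμ : ∀ᵐ g ∂μ, Bd M g) {β : ℝ}
    (hβ : Tendsto (fun n : ℕ => ainf μ n / n) atTop (nhds β)) {ε : ℝ} (hε : 0 < ε) :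
    ∃ s : ℝ, 0 < s ∧ ∃ m : ℕ, 1 ≤ m ∧ ∀ k : ℕ, ∀ v : Ed d, v ≠ 0 →
      ∫⁻ g, ENNReal.ofReal (Real.exp (s * ((m * k : ℕ) * (β - ε) - Real.log ‖glCLM g v‖)))
        ∂(mconvN μ (m * k)) ≤ ENNReal.ofReal (Real.exp (s * (- Real.log ‖v‖))) := by
  have hev := (hβ.eventually (lt_mem_nhds (show β - ε / 2 < β by linarith))).and
    (eventually_ge_atTop 1)
  obtain ⟨m, hm, hm1⟩ := hev.exists
  have hm0 : (0 : ℝ) < m := by exact_mod_cast hm1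
  rw [lt_div_iff₀ hm0] at hm
  have hlM : 0 ≤ Real.log M := Real.log_nonneg hM
  set B : ℝ := |m * (β - ε)| + m * Real.log M + 1 with hB
  have hB1 : 1 ≤ B := by
    have : 0 ≤ |m * (β - ε)| := abs_nonneg _
    have : 0 ≤ m * Real.log M := by positivity
    linarith
  have hB0 : 0 < B := by linarith
  obtain ⟨s, hs0, hs1, hs2⟩ : ∃ s : ℝ, 0 < s ∧ s * B ≤ 1 ∧ s * B ^ 2 ≤ m * (ε / 2) := by
    refine ⟨min (1 / B) (m * (ε / 2) / B ^ 2), by positivity, ?_, ?_⟩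
    · calc _ ≤ 1 / B * B := by gcongr; exact min_le_left _ _
        _ = 1 := by field_simp
    · calc _ ≤ m * (ε / 2) / B ^ 2 * B ^ 2 := by gcongr; exact min_le_right _ _
        _ = _ := by field_simp
  have hmeas : ∀ (c : ℝ) (v : Ed d), Measurable (fun g : GLd d =>
      ENNReal.ofReal (Real.exp (s * (c - Real.log ‖glCLM g v‖)))) := by
    intro c v
    have := measurable_lognorm v
    fun_prop
  -- one step
  have hone : ∀ v : Ed d, v ≠ 0 →
      ∫⁻ g, ENNReal.ofReal (Real.exp (s * (m * (β - ε) - Real.log ‖glCLM g v‖)))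
        ∂(mconvN μ m) ≤ ENNReal.ofReal (Real.exp (s * (- Real.log ‖v‖))) := by
    intro v hv
    have hX : Measurable (fun g : GLd d =>
        m * (β - ε) - (Real.log ‖glCLM g v‖ - Real.log ‖v‖)) := by
      have := measurable_lognorm v
      fun_prop
    have hXB : ∀ᵐ g ∂(mconvN μ m),
        |m * (β - ε) - (Real.log ‖glCLM g v‖ - Real.log ‖v‖)| ≤ B := by
      filter_upwards [ae_lognorm hμ m hv] with g hg
      have := abs_sub (m * (β - ε)) (Real.log ‖glCLM g v‖ - Real.log ‖v‖)
      linarith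
    have hXi : ∫ g, (m * (β - ε) - (Real.log ‖glCLM g v‖ - Real.log ‖v‖)) ∂(mconvN μ m)
        ≤ -(m * (ε / 2)) := by
      have i1 := integrable_lognorm hμ m hv
      have i2 : Integrable (fun g => Real.log ‖glCLM g v‖ - Real.log ‖v‖) (mconvN μ m) :=
        i1.sub (integrable_const _)
      rw [integral_sub (integrable_const _) i2, integral_sub i1 (integrable_const _)]
      simp only [integral_const, probReal_univ, smul_eq_mul, one_mul]
      have h1 := Aav_unit hμ m hv
      have h2 := ainf_le hμ m (norm_unit hv)
      rw [Aav] at h1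
      linarith
    have h := exp_moment hX hXB hXi hs0.le hs1
    have h' : ENNReal.ofReal (1 - s * (m * (ε / 2)) + s ^ 2 * B ^ 2) ≤ 1 := by
      rw [← ENNReal.ofReal_one]
      apply ENNReal.ofReal_le_ofReal
      nlinarith
    have e : ∀ g : GLd d, ENNReal.ofReal (Real.exp (s * (m * (β - ε) - Real.log ‖glCLM g v‖)))
        = ENNReal.ofReal (Real.exp (s * (- Real.log ‖v‖))) * ENNReal.ofReal (Real.exp
          (s * (m * (β - ε) - (Real.log ‖glCLM g v‖ - Real.log ‖v‖)))) := by
      intro g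
      rw [← ENNReal.ofReal_mul (Real.exp_pos _).le, ← Real.exp_add]
      congr 2; ring
    simp only [e]
    rw [lintegral_const_mul' _ _ ENNReal.ofReal_ne_top]
    calc _ ≤ ENNReal.ofReal (Real.exp (s * (- Real.log ‖v‖))) * 1 := by
          gcongr; exact h.trans h'
      _ = _ := mul_one _
  refine ⟨s, hs0, m, hm1, ?_⟩
  intro k
  induction k with
  | zero =>
    intro v hv
    have hms := hmeas 0 v
    simp only [mul_zero, Nat.cast_zero, zero_mul, mconvN]
    rw [lintegral_dirac' _ hms, glCLM_one]
    simp
  | succ k ih =>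
    intro v hv
    rw [mul_add, mul_one, lintegral_mconvN μ (m * k) m (hmeas _ v)]
    refine le_trans ?_ (hone v hv)
    apply lintegral_mono
    intro h
    have e : ∀ g : GLd d, ENNReal.ofReal (Real.exp (s * ((m * k + m : ℕ) * (β - ε)
        - Real.log ‖glCLM (g * h) v‖)))
        = ENNReal.ofReal (Real.exp (s * (m * (β - ε)))) * ENNReal.ofReal (Real.exp
          (s * ((m * k : ℕ) * (β - ε) - Real.log ‖glCLM g (glCLM h v)‖))) := by
      intro g
      rw [← ENNReal.ofReal_mul (Real.exp_pos _).le, ← Real.exp_add, glCLM_mul]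
      congr 2; push_cast; ring
    simp only [e]
    rw [lintegral_const_mul' _ _ ENNReal.ofReal_ne_top]
    refine (mul_le_mul_right (ih _ (glCLM_ne_zero h hv)) _).trans ?_
    rw [← ENNReal.ofReal_mul (Real.exp_pos _).le, ← Real.exp_add]
    apply le_of_eq
    congr 2; ring

/-- The functional measuring the upper tail. -/
def Fav (μ : Measure (GLd d)) (β : ℝ) (n : ℕ) (w : Ed d) : ℝ :=
  (n : ℝ)⁻¹ * ∫ g, Real.log (1 + Real.exp (-(n * β)) * ‖glCLM g w‖) ∂(mconvN μ n)

lemma log_one_add_nonneg {a : ℝ} (ha : 0 ≤ a) : 0 ≤ Real.log (1 + a) :=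
  Real.log_nonneg (by linarith)

lemma log_one_add_add {a b : ℝ} (ha : 0 ≤ a) (hb : 0 ≤ b) :
    Real.log (1 + (a + b)) ≤ Real.log (1 + a) + Real.log (1 + b) := by
  rw [← Real.log_mul (by positivity) (by positivity)]
  apply Real.log_le_log (by positivity)
  nlinarith [mul_nonneg ha hb]

lemma log_one_add_mul {a b : ℝ} (ha : 0 ≤ a) (hb : 0 ≤ b) :
    Real.log (1 + a * b) ≤ Real.log (1 + a) + Real.log (1 + b) := by
  rw [← Real.log_mul (by positivity) (by positivity)]
  apply Real.log_le_log (by positivity)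
  nlinarith [mul_nonneg ha hb]

lemma measurable_Fint (c : ℝ) (w : Ed d) :
    Measurable (fun g : GLd d => Real.log (1 + Real.exp c * ‖glCLM g w‖)) := by
  have := (continuous_gapp w).norm.measurable
  fun_prop

lemma ae_Fint {μ : Measure (GLd d)} [IsProbabilityMeasure μ] {M : ℝ}
    (hμ : ∀ᵐ g ∂μ, Bd M g) (c : ℝ) (n : ℕ) (w : Ed d) :
    ∀ᵐ g ∂(mconvN μ n), |Real.log (1 + Real.exp c * ‖glCLM g w‖)|
      ≤ Real.log (1 + Real.exp c * (M ^ n * ‖w‖)) := by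
  filter_upwards [ae_Bd hμ n] with g hg
  have h0 : 0 ≤ Real.exp c * ‖glCLM g w‖ := by positivity
  rw [abs_of_nonneg (log_one_add_nonneg h0)]
  apply Real.log_le_log (by linarith)
  have := (norm_gapp_le g w).trans (mul_le_mul_of_nonneg_right hg.1 (norm_nonneg w))
  gcongr

lemma integrable_Fint {μ : Measure (GLd d)} [IsProbabilityMeasure μ] {M : ℝ}
    (hμ : ∀ᵐ g ∂μ, Bd M g) (c : ℝ) (n : ℕ) (w : Ed d) :
    Integrable (fun g => Real.log (1 + Real.exp c * ‖glCLM g w‖)) (mconvN μ n) :=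
  integrable_of_bdd (measurable_Fint c w) (ae_Fint hμ c n w)

lemma Fav_nonneg (μ : Measure (GLd d)) (β : ℝ) (n : ℕ) (w : Ed d) : 0 ≤ Fav μ β n w := by
  apply mul_nonneg (by positivity)
  apply integral_nonneg
  intro g
  exact log_one_add_nonneg (by positivity)

lemma Fav_zero (μ : Measure (GLd d)) (β : ℝ) (n : ℕ) : Fav μ β n 0 = 0 := by
  simp [Fav]

lemma Fav_add {μ : Measure (GLd d)} [IsProbabilityMeasure μ] {M : ℝ}
    (hμ : ∀ᵐ g ∂μ, Bd M g) (β : ℝ) (n : ℕ) (v w : Ed d) :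
    Fav μ β n (v + w) ≤ Fav μ β n v + Fav μ β n w := by
  unfold Fav
  rw [← mul_add, ← integral_add (integrable_Fint hμ _ n v) (integrable_Fint hμ _ n w)]
  apply mul_le_mul_of_nonneg_left _ (by positivity)
  apply integral_mono (integrable_Fint hμ _ n (v + w))
    ((integrable_Fint hμ _ n v).add (integrable_Fint hμ _ n w))
  intro g
  refine le_trans ?_ (log_one_add_add (a := Real.exp (-(n * β)) * ‖glCLM g v‖)
    (b := Real.exp (-(n * β)) * ‖glCLM g w‖) (by positivity) (by positivity))
  apply Real.log_le_log (by positivity)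
  rw [← mul_add, map_add]
  gcongr
  exact norm_add_le _ _

lemma Fav_smul {μ : Measure (GLd d)} [IsProbabilityMeasure μ] {M : ℝ}
    (hμ : ∀ᵐ g ∂μ, Bd M g) (β : ℝ) (n : ℕ) (c : ℝ) (w : Ed d) :
    Fav μ β n (c • w) ≤ (n : ℝ)⁻¹ * Real.log (1 + |c|) + Fav μ β n w := by
  unfold Fav
  rw [← mul_add]
  apply mul_le_mul_of_nonneg_left _ (by positivity)
  have : Real.log (1 + |c|) + ∫ g, Real.log (1 + Real.exp (-(n * β)) * ‖glCLM g w‖) ∂(mconvN μ n)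
    = ∫ g, (Real.log (1 + |c|) + Real.log (1 + Real.exp (-(n * β)) * ‖glCLM g w‖)) ∂(mconvN μ n) := by
    rw [integral_add (integrable_const _) (integrable_Fint hμ _ n w)]; simp
  rw [this]
  apply integral_mono (integrable_Fint hμ _ n (c • w))
    ((integrable_const _).add (integrable_Fint hμ _ n w))
  intro g
  refine le_trans ?_ (log_one_add_mul (a := |c|)
    (b := Real.exp (-(n * β)) * ‖glCLM g w‖) (by positivity) (by positivity))
  apply Real.log_le_log (by positivity)
  rw [map_smul, norm_smul, Real.norm_eq_abs]
  apply le_of_eq; ring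

lemma log_one_add_exp_le (t : ℝ) : Real.log (1 + Real.exp t) ≤ Real.log 2 + max t 0 := by
  have h : 1 + Real.exp t ≤ 2 * Real.exp (max t 0) := by
    have h1 : Real.exp t ≤ Real.exp (max t 0) := Real.exp_le_exp.2 (le_max_left _ _)
    have h2 : 1 ≤ Real.exp (max t 0) := Real.one_le_exp (le_max_right _ _)
    linarith
  have := Real.log_le_log (by positivity) h
  rwa [Real.log_mul (by norm_num) (Real.exp_pos _).ne', Real.log_exp] at this

/-- The minimal vector has vanishing upper tail along factorials. -/
lemma Fav_minimal {μ : Measure (GLd d)} [IsProbabilityMeasure μ] {M : ℝ}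
    (hM : 1 ≤ M) (hμ : ∀ᵐ g ∂μ, Bd M g) {β : ℝ}
    (hβ : Tendsto (fun n : ℕ => ainf μ n / n) atTop (nhds β))
    {v : Ed d} (hv : ‖v‖ = 1) (hmin : ∀ n : ℕ, 1 ≤ n → Aav μ n v ≤ n * β) :
    Tendsto (fun k : ℕ => Fav μ β k.factorial v) atTop (nhds 0) := by
  have hv0 := norm_one_ne hv
  have hbound : ∀ ε : ℝ, 0 < ε → ∃ C : ℝ, ∀ᶠ k : ℕ in atTop,
      Fav μ β k.factorial v ≤ ε + C / k.factorial := by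
    intro ε hε
    obtain ⟨s, hs, m, hm, hk⟩ := lower_moment hM hμ hβ hε
    refine ⟨Real.log 2 + 1 / s, ?_⟩
    filter_upwards [eventually_ge_atTop m] with k hkm
    obtain ⟨j, hj⟩ : m ∣ k.factorial := Nat.dvd_factorial (by omega) hkm
    have hpos : 1 ≤ k.factorial := Nat.factorial_pos k
    set n := k.factorial with hn
    have hn0 : (0 : ℝ) < n := by exact_mod_cast hpos
    have h1 := hk j v hv0
    rw [← hj, hv, Real.log_one] at h1
    simp only [neg_zero, mul_zero, Real.exp_zero, ENNReal.ofReal_one] at h1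
    have hmeas : Measurable (fun g : GLd d =>
        Real.exp (s * (n * (β - ε) - Real.log ‖glCLM g v‖))) := by
      have := measurable_lognorm v
      fun_prop
    have hE : Integrable (fun g : GLd d =>
        Real.exp (s * (n * (β - ε) - Real.log ‖glCLM g v‖))) (mconvN μ n) := by
      refine ⟨hmeas.aestronglyMeasurable, ?_⟩
      rw [hasFiniteIntegral_iff_ofReal (Eventually.of_forall fun g => (Real.exp_pos _).le)]
      exact lt_of_le_of_lt h1 ENNReal.one_lt_top
    have hE1 : ∫ g, Real.exp (s * (n * (β - ε) - Real.log ‖glCLM g v‖)) ∂(mconvN μ n) ≤ 1 := by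
      rw [← ofReal_integral_eq_lintegral_ofReal hE
        (Eventually.of_forall fun g => (Real.exp_pos _).le)] at h1
      rwa [← ENNReal.ofReal_one, ENNReal.ofReal_le_ofReal_iff zero_le_one] at h1
    -- pointwise bound
    have hpt : ∀ g : GLd d, Real.log (1 + Real.exp (-(n * β)) * ‖glCLM g v‖) ≤
        (Real.log 2 - n * β + n * ε) + (Real.log ‖glCLM g v‖
          + (1 / s) * Real.exp (s * (n * (β - ε) - Real.log ‖glCLM g v‖))) := by
      intro g
      have hg := norm_pos_iff.2 (glCLM_ne_zero g hv0)
      set t := Real.log ‖glCLM g v‖ with ht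
      have e : ‖glCLM g v‖ = Real.exp t := by rw [ht, Real.exp_log hg]
      rw [e, ← Real.exp_add]
      refine (log_one_add_exp_le _).trans ?_
      set u := n * (β - ε) - t with hu
      have hu1 : u ≤ (1 / s) * Real.exp (s * u) := by
        have := Real.add_one_le_exp (s * u)
        rw [one_div, ← div_eq_inv_mul, le_div_iff₀ hs]
        linarith
      have hu2 : 0 ≤ (1 / s) * Real.exp (s * u) := by positivity
      have hnε : 0 ≤ n * ε := by positivity
      rcases max_cases (-(n * β) + t) 0 with ⟨h, _⟩ | ⟨h, _⟩ <;> rw [h] <;> linarith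
    have hI := integrable_lognorm hμ n hv0
    have hIE : Integrable (fun g : GLd d => Real.log ‖glCLM g v‖
          + (1 / s) * Real.exp (s * (n * (β - ε) - Real.log ‖glCLM g v‖))) (mconvN μ n) :=
      hI.add (hE.const_mul _)
    have hle := integral_mono (integrable_Fint hμ (-(n * β)) n v)
      ((integrable_const _).add hIE) hpt
    have e2 : ∫ g, ((Real.log 2 - n * β + n * ε) + (Real.log ‖glCLM g v‖
          + (1 / s) * Real.exp (s * (n * (β - ε) - Real.log ‖glCLM g v‖)))) ∂(mconvN μ n)
        = (Real.log 2 - n * β + n * ε) + (Aav μ n v + (1 / s) *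
          ∫ g, Real.exp (s * (n * (β - ε) - Real.log ‖glCLM g v‖)) ∂(mconvN μ n)) := by
      rw [integral_add (integrable_const _) hIE, integral_add hI (hE.const_mul _),
        integral_const_mul]
      simp [Aav]
    have hle2 := hle.trans (le_of_eq e2)
    have h3 := hmin n hpos
    have h4 : (1 / s) * ∫ g, Real.exp (s * (n * (β - ε) - Real.log ‖glCLM g v‖)) ∂(mconvN μ n)
        ≤ 1 / s := by
      calc _ ≤ (1 / s) * 1 := by gcongr
        _ = _ := mul_one _
    rw [Fav, ← div_eq_inv_mul, div_le_iff₀ hn0]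
    have e3 : (ε + (Real.log 2 + 1 / s) / n) * n = n * ε + (Real.log 2 + 1 / s) := by
      field_simp
    rw [e3]
    linarith
  have hfac : Tendsto (fun k : ℕ => (k.factorial : ℝ)) atTop atTop :=
    tendsto_natCast_atTop_atTop.comp (tendsto_atTop_mono Nat.self_le_factorial tendsto_id)
  rw [Metric.tendsto_nhds]
  intro ε hε
  obtain ⟨C, hC⟩ := hbound (ε / 2) (by linarith)
  have h0 : Tendsto (fun k : ℕ => C / (k.factorial : ℝ)) atTop (nhds 0) :=
    hfac.const_div_atTop C
  filter_upwards [hC, h0.eventually (gt_mem_nhds (show (0 : ℝ) < ε / 2 by linarith))] with k h1 h2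
  rw [Real.dist_eq, sub_zero, abs_of_nonneg (Fav_nonneg _ _ _ _)]
  linarith


/-! ### Part 6: the slow subspace -/

/-- Vectors with vanishing upper tail along the sequence `ψ`. -/
def Wsub (μ : Measure (GLd d)) [IsProbabilityMeasure μ] {M : ℝ}
    (hμ : ∀ᵐ g ∂μ, Bd M g) (β : ℝ) (ψ : ℕ → ℕ) (hψ : Tendsto ψ atTop atTop) :
    Submodule ℝ (Ed d) where
  carrier := {w | Tendsto (fun k => Fav μ β (ψ k) w) atTop (nhds 0)}
  zero_mem' := by
    simp only [Set.mem_ofPred_eq, Fav_zero]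
    exact tendsto_const_nhds
  add_mem' := by
    intro v w hv hw
    have h := Tendsto.add hv hw
    rw [add_zero] at h
    exact squeeze_zero (fun k => Fav_nonneg _ _ _ _) (fun k => Fav_add hμ β _ v w) h
  smul_mem' := by
    intro c w hw
    have h1 : Tendsto (fun k => ((ψ k : ℕ) : ℝ)⁻¹ * Real.log (1 + |c|)) atTop (nhds 0) := by
      have := ((tendsto_natCast_atTop_atTop (R := ℝ)).comp hψ).inv_tendsto_atTop.mul_const
        (Real.log (1 + |c|))
      rw [zero_mul] at this
      exact this
    have h := h1.add hw
    rw [add_zero] at h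
    exact squeeze_zero (fun k => Fav_nonneg _ _ _ _) (fun k => Fav_smul hμ β _ c w) h

lemma mem_Wsub {μ : Measure (GLd d)} [IsProbabilityMeasure μ] {M : ℝ}
    {hμ : ∀ᵐ g ∂μ, Bd M g} {β : ℝ} {ψ : ℕ → ℕ} {hψ : Tendsto ψ atTop atTop} {w : Ed d} :
    w ∈ Wsub μ hμ β ψ hψ ↔ Tendsto (fun k => Fav μ β (ψ k) w) atTop (nhds 0) := Iff.rfl

lemma Wsub_le {μ : Measure (GLd d)} [IsProbabilityMeasure μ] {M : ℝ}
    {hμ : ∀ᵐ g ∂μ, Bd M g} {β : ℝ} {ψ : ℕ → ℕ} {hψ : Tendsto ψ atTop atTop} {τ : ℕ → ℕ}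
    (hτ : Tendsto τ atTop atTop) :
    Wsub μ hμ β ψ hψ ≤ Wsub μ hμ β (ψ ∘ τ) (hψ.comp hτ) := by
  intro w hw
  rw [mem_Wsub] at hw ⊢
  exact hw.comp hτ

/-- Averaging the tail functional over one step. -/
lemma Fav_step {μ : Measure (GLd d)} [IsProbabilityMeasure μ] {M : ℝ} (hM : 1 ≤ M)
    (hμ : ∀ᵐ g ∂μ, Bd M g) (β : ℝ) (n : ℕ) (w : Ed d) :
    Integrable (fun h => Fav μ β n (glCLM h w)) μ ∧
    ∫ h, Fav μ β n (glCLM h w) ∂μ ≤ (n : ℝ)⁻¹ * Real.log (1 + M) + Fav μ β n w := by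
  set F : GLd d → ℝ := fun g => Real.log (1 + Real.exp (-(n * β)) * ‖glCLM g w‖) with hF
  have hFm : Measurable F := measurable_Fint _ w
  have i1 := integrable_mconvN μ n 1 hFm (ae_Fint hμ (-(n * β)) (n + 1) w)
  have e1 := integral_mconvN μ n 1 hFm (ae_Fint hμ (-(n * β)) (n + 1) w)
  have i2 := integrable_mconvN μ 1 n hFm (ae_Fint hμ (-(n * β)) (1 + n) w)
  have e2 := integral_mconvN μ 1 n hFm (ae_Fint hμ (-(n * β)) (1 + n) w)
  have j1 := i1.integral_prod_right
  rw [mconvN_one] at i1 e1 i2 e2 j1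
  have hFav : ∀ h : GLd d, Fav μ β n (glCLM h w) = (n : ℝ)⁻¹ * ∫ g, F (g * h) ∂(mconvN μ n) := by
    intro h
    simp only [Fav, hF, glCLM_mul]
  refine ⟨?_, ?_⟩
  · simp only [hFav]
    exact j1.const_mul _
  · simp only [hFav]
    rw [integral_const_mul, ← e1, add_comm n 1, e2, Fav, ← mul_add]
    apply mul_le_mul_of_nonneg_left _ (by positivity)
    have hFi : Integrable F (mconvN μ n) := integrable_Fint hμ _ n w
    have e3 : Real.log (1 + M) + ∫ g, F g ∂(mconvN μ n)
        = ∫ g, (Real.log (1 + M) + F g) ∂(mconvN μ n) := by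
      rw [integral_add (integrable_const _) hFi]; simp
    rw [e3]
    apply integral_mono_ae i2.integral_prod_right ((integrable_const _).add hFi)
    filter_upwards [i2.prod_left_ae] with h hh
    have hb : ∀ᵐ g ∂μ, F (g * h) ≤ Real.log (1 + M) + F h := by
      filter_upwards [hμ] with g hg
      refine le_trans ?_ (log_one_add_mul (a := M)
        (b := Real.exp (-(n * β)) * ‖glCLM h w‖) (by linarith) (by positivity))
      apply Real.log_le_log (by positivity)
      have h1 := (norm_gapp_le g (glCLM h w)).trans
        (mul_le_mul_of_nonneg_right hg.1 (norm_nonneg _))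
      rw [glCLM_mul]
      have : Real.exp (-(n * β)) * ‖glCLM g (glCLM h w)‖
        ≤ Real.exp (-(n * β)) * (M * ‖glCLM h w‖) := by gcongr
      linarith
    calc ∫ g, F (g * h) ∂μ ≤ ∫ _, (Real.log (1 + M) + F h) ∂μ :=
          integral_mono_ae hh (integrable_const _) hb
      _ = _ := by simp

/-- A slow subspace of maximal dimension is invariant. -/
lemma exists_invariant {μ : Measure (GLd d)} [IsProbabilityMeasure μ] {M : ℝ} (hM : 1 ≤ M)
    (hμ : ∀ᵐ g ∂μ, Bd M g) (β : ℝ) (ψ₀ : ℕ → ℕ) (hψ₀ : Tendsto ψ₀ atTop atTop)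
    {v : Ed d} (hv : v ≠ 0) (hv0 : Tendsto (fun k => Fav μ β (ψ₀ k) v) atTop (nhds 0)) :
    ∃ ψ : ℕ → ℕ, ∃ hψ : Tendsto ψ atTop atTop, Wsub μ hμ β ψ hψ ≠ ⊥ ∧
      ∀ᵐ g ∂μ, (Wsub μ hμ β ψ hψ).map (glCLM g).toLinearMap = Wsub μ hμ β ψ hψ := by
  classical
  let D : Set ℕ := {r | ∃ ψ : ℕ → ℕ, ∃ hψ : Tendsto ψ atTop atTop, v ∈ Wsub μ hμ β ψ hψ ∧
    Module.finrank ℝ (Wsub μ hμ β ψ hψ) = r}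
  have hDne : D.Nonempty := ⟨_, ψ₀, hψ₀, hv0, rfl⟩
  have hDb : BddAbove D := by
    refine ⟨Module.finrank ℝ (Ed d), ?_⟩
    rintro r ⟨ψ, hψ, -, rfl⟩
    exact Submodule.finrank_le _
  obtain ⟨ψ, hψ, hvW, hr⟩ := Nat.sSup_mem hDne hDb
  refine ⟨ψ, hψ, ?_, ?_⟩
  · intro h
    rw [h, Submodule.mem_bot] at hvW
    exact hv hvW
  set W := Wsub μ hμ β ψ hψ with hW
  let b := Module.finBasis ℝ W
  let H : ℕ → GLd d → ℝ := fun k h => ∑ i, Fav μ β (ψ k) (glCLM h (b i : Ed d))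
  have hHint : ∀ k, Integrable (H k) μ := fun k =>
    integrable_finsetSum _ fun i _ => (Fav_step hM hμ β (ψ k) (b i : Ed d)).1
  have hHnn : ∀ k h, 0 ≤ H k h := fun k h => Finset.sum_nonneg fun i _ => Fav_nonneg _ _ _ _
  have hH0 : Tendsto (fun k => ∫ h, H k h ∂μ) atTop (nhds 0) := by
    have hlim : Tendsto (fun k => ∑ i, (((ψ k : ℕ) : ℝ)⁻¹ * Real.log (1 + M)
        + Fav μ β (ψ k) (b i : Ed d))) atTop (nhds 0) := by
      have : (0 : ℝ) = ∑ i : Fin (Module.finrank ℝ W), (0 : ℝ) := by simp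
      rw [this]
      apply tendsto_finsetSum
      intro i _
      have h1 := ((tendsto_natCast_atTop_atTop (R := ℝ)).comp hψ).inv_tendsto_atTop.mul_const
        (Real.log (1 + M))
      rw [zero_mul] at h1
      have h2 : Tendsto (fun k => Fav μ β (ψ k) (b i : Ed d)) atTop (nhds 0) :=
        mem_Wsub.1 (b i).2
      have h3 := h1.add h2
      rw [add_zero] at h3
      exact h3
    refine squeeze_zero (fun k => integral_nonneg (hHnn k)) (fun k => ?_) hlim
    rw [integral_finsetSum _ fun i _ => (Fav_step hM hμ β (ψ k) (b i : Ed d)).1]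
    exact Finset.sum_le_sum fun i _ => (Fav_step hM hμ β (ψ k) (b i : Ed d)).2
  have hHm : TendstoInMeasure μ H atTop (fun _ => (0 : ℝ)) := by
    apply tendstoInMeasure_of_tendsto_eLpNorm one_ne_zero
      (fun k => (hHint k).aestronglyMeasurable) aestronglyMeasurable_const
    have : ∀ k, eLpNorm (H k - fun _ => (0 : ℝ)) 1 μ = ENNReal.ofReal (∫ h, H k h ∂μ) := by
      intro k
      have e : (H k - fun _ => (0 : ℝ)) = H k := by ext h; simp
      rw [e, eLpNorm_one_eq_lintegral_enorm,
        ofReal_integral_eq_lintegral_ofReal (hHint k) (Eventually.of_forall (hHnn k))]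
      apply lintegral_congr
      intro h
      rw [Real.enorm_eq_ofReal (hHnn k h)]
    simp only [this]
    have := ENNReal.tendsto_ofReal hH0
    rwa [ENNReal.ofReal_zero] at this
  obtain ⟨τ, hτ, hae⟩ := hHm.exists_seq_tendsto_ae
  have hWτ : W = Wsub μ hμ β (ψ ∘ τ) (hψ.comp hτ.tendsto_atTop) := by
    have hle := Wsub_le (hμ := hμ) (β := β) (hψ := hψ) hτ.tendsto_atTop
    apply Submodule.eq_of_le_of_finrank_le hle
    rw [hr]
    exact le_csSup hDb ⟨_, _, hle hvW, rfl⟩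
  filter_upwards [hae] with h hh
  have hmem : ∀ i, glCLM h (b i : Ed d) ∈ W := by
    intro i
    refine hWτ.ge (mem_Wsub.2 ?_)
    refine squeeze_zero (fun k => Fav_nonneg _ _ _ _) (fun k => ?_) hh
    exact Finset.single_le_sum (f := fun i => Fav μ β ((ψ ∘ τ) k) (glCLM h (b i : Ed d)))
      (fun i _ => Fav_nonneg _ _ _ _) (Finset.mem_univ i)
  have hle : W.map (glCLM h).toLinearMap ≤ W := by
    rw [Submodule.map_le_iff_le_comap]
    intro w hw
    have h1 : w = ∑ i, b.repr ⟨w, hw⟩ i • (b i : Ed d) := by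
      have := congrArg (Subtype.val) (b.sum_repr ⟨w, hw⟩)
      rw [Submodule.coe_sum] at this
      exact this.symm
    rw [h1]
    exact Submodule.sum_mem _ fun i _ => Submodule.smul_mem _ _ (hmem i)
  apply Submodule.eq_of_le_of_finrank_le hle
  exact (Submodule.equivMapOfInjective _ (glLinear_injective h) W).finrank_eq.le


/-! ### Part 7: restricted norms and identification of the growth rate -/

/-- The norm of the restriction of `g` to `V`. -/
def rnorm (V : Submodule ℝ (Ed d)) (g : GLd d) : ℝ :=
  ‖LinearMap.toContinuousLinearMap ((glCLM g).toLinearMap.domRestrict V)‖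

lemma rnorm_nonneg (V : Submodule ℝ (Ed d)) (g : GLd d) : 0 ≤ rnorm V g :=
  ContinuousLinearMap.opNorm_nonneg _

lemma le_rnorm (V : Submodule ℝ (Ed d)) (g : GLd d) {v : Ed d} (hv : v ∈ V) :
    ‖glCLM g v‖ ≤ rnorm V g * ‖v‖ :=
  (LinearMap.toContinuousLinearMap ((glCLM g).toLinearMap.domRestrict V)).le_opNorm ⟨v, hv⟩

lemma rnorm_le (V : Submodule ℝ (Ed d)) (g : GLd d) {C : ℝ} (hC : 0 ≤ C)
    (h : ∀ v ∈ V, ‖glCLM g v‖ ≤ C * ‖v‖) : rnorm V g ≤ C :=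
  ContinuousLinearMap.opNorm_le_bound _ hC (fun v => h v.1 v.2)

lemma rnorm_top (g : GLd d) : rnorm ⊤ g = gnorm g := by
  apply le_antisymm
  · exact rnorm_le _ _ (gnorm_nonneg _) (fun v _ => norm_gapp_le g v)
  · exact ContinuousLinearMap.opNorm_le_bound _ (rnorm_nonneg _ _)
      (fun v => le_rnorm ⊤ g Submodule.mem_top)

lemma measurable_rnorm (V : Submodule ℝ (Ed d)) : Measurable (rnorm V : GLd d → ℝ) := by
  have h : ∀ g : GLd d, rnorm V g = ‖(glCLM g).comp V.subtypeL‖ := by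
    intro g
    apply le_antisymm
    · exact rnorm_le _ _ (ContinuousLinearMap.opNorm_nonneg _) (fun v hv =>
        ((glCLM g).comp V.subtypeL).le_opNorm ⟨v, hv⟩)
    · exact ContinuousLinearMap.opNorm_le_bound _ (rnorm_nonneg _ _)
        (fun v => le_rnorm V g v.2)
  have h2 : (rnorm V : GLd d → ℝ) = fun g => ‖(glCLM g).comp V.subtypeL‖ := funext h
  rw [h2]
  exact (continuous_glCLM.clm_comp continuous_const).norm.measurable

lemma exists_unit_mem {V : Submodule ℝ (Ed d)} (hV : V ≠ ⊥) : ∃ v ∈ V, ‖v‖ = 1 := by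
  obtain ⟨v, hv, h0⟩ := Submodule.exists_mem_ne_zero_of_ne_bot hV
  exact ⟨unit v, V.smul_mem _ hv, norm_unit h0⟩

lemma rnorm_pos {V : Submodule ℝ (Ed d)} (hV : V ≠ ⊥) (g : GLd d) : 0 < rnorm V g := by
  obtain ⟨v, hv, h1⟩ := exists_unit_mem hV
  have := le_rnorm V g hv
  rw [h1, mul_one] at this
  exact lt_of_lt_of_le (norm_pos_iff.2 (glCLM_ne_zero g (norm_one_ne h1))) this

lemma Bd.log_rnorm {V : Submodule ℝ (Ed d)} (hV : V ≠ ⊥) {R : ℝ} {g : GLd d} (hg : Bd R g) :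
    |Real.log (rnorm V g)| ≤ Real.log R := by
  obtain ⟨v, hv, h1⟩ := exists_unit_mem hV
  have hp := rnorm_pos hV g
  have h2 := le_rnorm V g hv
  rw [h1, mul_one] at h2
  have h3 := (abs_le.1 (hg.log_le (norm_one_ne h1))).1
  rw [h1, Real.log_one, sub_zero] at h3
  have h4 := Real.log_le_log (norm_pos_iff.2 (glCLM_ne_zero g (norm_one_ne h1))) h2
  have h5 : rnorm V g ≤ R := (rnorm_le V g (gnorm_nonneg g) (fun v _ => norm_gapp_le g v)).trans hg.1
  have h6 := Real.log_le_log hp h5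
  rw [abs_le]
  constructor <;> linarith

lemma rnorm_mul_le {V : Submodule ℝ (Ed d)} {g h : GLd d}
    (hh : ∀ v ∈ V, glCLM h v ∈ V) : rnorm V (g * h) ≤ rnorm V g * rnorm V h := by
  apply rnorm_le _ _ (mul_nonneg (rnorm_nonneg _ _) (rnorm_nonneg _ _))
  intro v hv
  rw [glCLM_mul, mul_assoc]
  exact (le_rnorm V g (hh v hv)).trans
    (mul_le_mul_of_nonneg_left (le_rnorm V h hv) (rnorm_nonneg _ _))

lemma measurableSet_inv (V : Submodule ℝ (Ed d)) :
    MeasurableSet {h : GLd d | ∀ v ∈ V, glCLM h v ∈ V} := by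
  have : {h : GLd d | ∀ v ∈ V, glCLM h v ∈ V} = ⋂ v ∈ V, {h | glCLM h v ∈ V} := by
    ext h; simp
  rw [this]
  apply IsClosed.measurableSet
  apply isClosed_biInter
  intro v _
  exact (Submodule.closed_of_finiteDimensional V).preimage (continuous_gapp v)

lemma ae_inv {μ : Measure (GLd d)} [IsProbabilityMeasure μ] {V : Submodule ℝ (Ed d)}
    (hinv : ∀ᵐ g ∂μ, V.map (glCLM g).toLinearMap = V) (n : ℕ) :
    ∀ᵐ h ∂(mconvN μ n), ∀ v ∈ V, glCLM h v ∈ V := by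
  have h1 : ∀ᵐ g ∂μ, ∀ v ∈ V, glCLM g v ∈ V := by
    filter_upwards [hinv] with g hg v hv
    rw [← hg]
    exact Submodule.mem_map_of_mem hv
  induction n with
  | zero =>
    rw [mconvN, ae_dirac_iff (measurableSet_inv V)]
    intro v hv
    rwa [glCLM_one]
  | succ n ih =>
    rw [mconvN_succ]
    exact ae_mconv (measurableSet_inv V) ih h1 (fun g k hg hk v hv => by
      rw [glCLM_mul]; exact hg _ (hk v hv))

lemma tendsto_rest {μ : Measure (GLd d)} [IsProbabilityMeasure μ] {M : ℝ}
    (hμ : ∀ᵐ g ∂μ, Bd M g) {V : Submodule ℝ (Ed d)} (hV : V ≠ ⊥)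
    (hinv : ∀ᵐ g ∂μ, V.map (glCLM g).toLinearMap = V) :
    Tendsto (fun n : ℕ => (n : ℝ)⁻¹ * ∫ g, Real.log (rnorm V g) ∂(mconvN μ n)) atTop
      (nhds (L1rest μ V)) := by
  obtain ⟨l, hl⟩ := fekete μ (f := fun g => Real.log (rnorm V g)) (measurable_rnorm V).log
    (B := Real.log M)
    (by
      intro n
      filter_upwards [ae_Bd hμ n] with g hg
      have := hg.log_rnorm hV
      rwa [Real.log_pow] at this)
    (by
      intro m
      filter_upwards [ae_inv hinv m] with h hh g
      rw [← Real.log_mul (rnorm_pos hV g).ne' (rnorm_pos hV h).ne']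
      exact Real.log_le_log (rnorm_pos hV _) (rnorm_mul_le hh))
  have : L1rest μ V = l := hl.limUnder_eq
  rw [this]
  exact hl

lemma L1rest_top (μ : Measure (GLd d)) : L1rest μ ⊤ = L1 μ := by
  have h : ∀ g : GLd d,
    ‖LinearMap.toContinuousLinearMap ((glCLM g).toLinearMap.domRestrict ⊤)‖ = gnorm g := rnorm_top
  simp only [L1rest, L1, h]

lemma tendsto_L12 (hd : 2 ≤ d) {μ : Measure (GLd d)} [IsProbabilityMeasure μ] {M : ℝ}
    (hμ : ∀ᵐ g ∂μ, Bd M g) :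
    Tendsto (fun n : ℕ => (n : ℝ)⁻¹ * ∫ g, Real.log (N2 g) ∂(mconvN μ n)) atTop
      (nhds (L12 μ)) := by
  obtain ⟨l, hl⟩ := fekete μ (f := fun g => Real.log (N2 g)) measurable_N2.log
    (B := 2 * Real.log M)
    (by
      intro n
      filter_upwards [ae_Bd hμ n] with g hg
      have := hg.log_N2 hd
      rw [Real.log_pow] at this
      linarith)
    (by
      intro m
      refine Eventually.of_forall fun h g => ?_
      rw [← Real.log_mul (N2_pos hd g).ne' (N2_pos hd h).ne']
      exact Real.log_le_log (N2_pos hd _) (N2_mul_le g h))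
  have : L12 μ = l := hl.limUnder_eq
  rw [this]
  exact hl

/-- The restricted norm is controlled by the images of a basis. -/
lemma rnorm_le_basis (V : Submodule ℝ (Ed d)) : ∃ C : ℝ, 0 ≤ C ∧ ∀ g : GLd d,
    rnorm V g ≤ C * ∑ i, ‖glCLM g ((Module.finBasis ℝ V) i : Ed d)‖ := by
  let b := Module.finBasis ℝ V
  let e : V →L[ℝ] (Fin (Module.finrank ℝ V) → ℝ) :=
    LinearMap.toContinuousLinearMap b.equivFun.toLinearMap
  refine ⟨‖e‖, ContinuousLinearMap.opNorm_nonneg _, fun g => ?_⟩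
  apply rnorm_le
  · exact mul_nonneg (ContinuousLinearMap.opNorm_nonneg _) (Finset.sum_nonneg fun i _ => norm_nonneg _)
  intro v hv
  have h1 : v = ∑ i, b.repr ⟨v, hv⟩ i • (b i : Ed d) := by
    have := congrArg (Subtype.val) (b.sum_repr ⟨v, hv⟩)
    rw [Submodule.coe_sum] at this
    exact this.symm
  have h2 : ∀ i, |b.repr ⟨v, hv⟩ i| ≤ ‖e‖ * ‖v‖ := by
    intro i
    have h3 := e.le_opNorm ⟨v, hv⟩
    have h4 := norm_le_pi_norm (e ⟨v, hv⟩) i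
    exact h4.trans h3
  calc ‖glCLM g v‖ = ‖∑ i, b.repr ⟨v, hv⟩ i • glCLM g (b i : Ed d)‖ := by
        conv_lhs => rw [h1]
        rw [map_sum]
        simp only [map_smul]
    _ ≤ ∑ i, ‖b.repr ⟨v, hv⟩ i • glCLM g (b i : Ed d)‖ := norm_sum_le _ _
    _ ≤ ∑ i, (‖e‖ * ‖v‖) * ‖glCLM g (b i : Ed d)‖ := by
        apply Finset.sum_le_sum
        intro i _
        rw [norm_smul, Real.norm_eq_abs]
        exact mul_le_mul_of_nonneg_right (h2 i) (norm_nonneg _)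
    _ = _ := by rw [← Finset.mul_sum]; ring

lemma log_one_add_sum {ι : Type*} (s : Finset ι) (a : ι → ℝ) (ha : ∀ i, 0 ≤ a i) :
    Real.log (1 + ∑ i ∈ s, a i) ≤ ∑ i ∈ s, Real.log (1 + a i) := by
  classical
  induction s using Finset.induction_on with
  | empty => simp
  | insert i s hi ih =>
    rw [Finset.sum_insert hi, Finset.sum_insert hi]
    exact (log_one_add_add (ha i) (Finset.sum_nonneg fun j _ => ha j)).trans (by linarith)

lemma L1rest_le_beta {μ : Measure (GLd d)} [IsProbabilityMeasure μ] {M : ℝ}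
    (hμ : ∀ᵐ g ∂μ, Bd M g) {β : ℝ} {ψ : ℕ → ℕ} (hψ : Tendsto ψ atTop atTop)
    (hne : Wsub μ hμ β ψ hψ ≠ ⊥)
    (hinv : ∀ᵐ g ∂μ, (Wsub μ hμ β ψ hψ).map (glCLM g).toLinearMap = Wsub μ hμ β ψ hψ) :
    L1rest μ (Wsub μ hμ β ψ hψ) ≤ β := by
  have hlim := (tendsto_rest hμ hne hinv).comp hψ
  set V := Wsub μ hμ β ψ hψ with hV
  obtain ⟨C, hC, hb⟩ := rnorm_le_basis V
  set b := Module.finBasis ℝ V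
  have hup : Tendsto (fun k => β + (((ψ k : ℕ) : ℝ)⁻¹ * Real.log (1 + C)
      + ∑ i, Fav μ β (ψ k) (b i : Ed d))) atTop (nhds (β + (0 + ∑ _i : Fin (Module.finrank ℝ V), (0 : ℝ)))) := by
    refine tendsto_const_nhds.add (Tendsto.add ?_ ?_)
    · have h1 := ((tendsto_natCast_atTop_atTop (R := ℝ)).comp hψ).inv_tendsto_atTop.mul_const
        (Real.log (1 + C))
      rw [zero_mul] at h1
      exact h1
    · apply tendsto_finsetSum
      intro i _
      exact mem_Wsub.1 (b i).2
  simp only [Finset.sum_const_zero, add_zero] at hup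
  refine le_of_tendsto_of_tendsto hlim hup ?_
  filter_upwards [hψ.eventually (eventually_ge_atTop 1)] with k hk
  dsimp only [Function.comp]
  set n := ψ k with hn
  have hn0 : (0 : ℝ) < n := by exact_mod_cast hk
  have hpt : ∀ g : GLd d, Real.log (rnorm V g) ≤ (n * β + Real.log (1 + C)) +
      ∑ i, Real.log (1 + Real.exp (-(n * β)) * ‖glCLM g (b i : Ed d)‖) := by
    intro g
    have hp := rnorm_pos hne g
    have h1 : Real.log (rnorm V g) - n * β = Real.log (Real.exp (-(n * β)) * rnorm V g) := by
      rw [Real.log_mul (Real.exp_pos _).ne' hp.ne', Real.log_exp]; ring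
    have h2 : Real.exp (-(n * β)) * rnorm V g
        ≤ 1 + C * ∑ i, Real.exp (-(n * β)) * ‖glCLM g (b i : Ed d)‖ := by
      have : Real.exp (-(n * β)) * rnorm V g ≤ Real.exp (-(n * β)) *
        (C * ∑ i, ‖glCLM g (b i : Ed d)‖) := mul_le_mul_of_nonneg_left (hb g) (Real.exp_pos _).le
      rw [← Finset.mul_sum]
      linarith
    have hsn : 0 ≤ ∑ i, Real.exp (-(n * β)) * ‖glCLM g (b i : Ed d)‖ :=
      Finset.sum_nonneg fun i _ => by positivity
    have h3 := Real.log_le_log (mul_pos (Real.exp_pos _) hp) h2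
    have h4 := log_one_add_mul hC hsn
    have h5 := log_one_add_sum Finset.univ
      (fun i => Real.exp (-(n * β)) * ‖glCLM g (b i : Ed d)‖) (fun i => by positivity)
    linarith
  have hI1 : Integrable (fun g => Real.log (rnorm V g)) (mconvN μ n) := by
    apply integrable_of_bdd (measurable_rnorm V).log (C := n * Real.log M)
    filter_upwards [ae_Bd hμ n] with g hg
    have := hg.log_rnorm hne
    rwa [Real.log_pow] at this
  have hI2 : ∀ i, Integrable (fun g => Real.log (1 + Real.exp (-(n * β)) *
    ‖glCLM g (b i : Ed d)‖)) (mconvN μ n) := fun i => integrable_Fint hμ _ n _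
  have hI3 : Integrable (fun g => ∑ i, Real.log (1 + Real.exp (-(n * β)) *
    ‖glCLM g (b i : Ed d)‖)) (mconvN μ n) := integrable_finsetSum _ fun i _ => hI2 i
  have hle := integral_mono hI1 ((integrable_const _).add hI3) hpt
  have e : ∫ g, ((n * β + Real.log (1 + C)) +
      ∑ i, Real.log (1 + Real.exp (-(n * β)) * ‖glCLM g (b i : Ed d)‖)) ∂(mconvN μ n)
      = (n * β + Real.log (1 + C)) +
      ∑ i, ∫ g, Real.log (1 + Real.exp (-(n * β)) * ‖glCLM g (b i : Ed d)‖) ∂(mconvN μ n) := by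
    rw [integral_add (integrable_const _) hI3, integral_finsetSum _ fun i _ => hI2 i]
    simp
  have hle2 := mul_le_mul_of_nonneg_left (hle.trans (le_of_eq e)) (inv_nonneg.2 hn0.le)
  refine hle2.trans (le_of_eq ?_)
  rw [mul_add, mul_add, Finset.mul_sum, ← mul_assoc, inv_mul_cancel₀ hn0.ne', one_mul, add_assoc]
  rfl

/-- The minimal growth rate equals the top Lyapunov exponent. -/
lemma L1_le_beta (hd : 2 ≤ d) {μ : Measure (GLd d)} [IsProbabilityMeasure μ] {M : ℝ}
    (hM : 1 ≤ M) (hμ : ∀ᵐ g ∂μ, Bd M g) (hqi : QuasiIrreducible μ) {β : ℝ}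
    (hβ : Tendsto (fun n : ℕ => ainf μ n / n) atTop (nhds β)) : L1 μ ≤ β := by
  obtain ⟨v, hv, hmin⟩ := exists_minimal hd hM hμ hβ
  have hF := Fav_minimal hM hμ hβ hv hmin
  obtain ⟨ψ, hψ, hne, hinv⟩ := exists_invariant hM hμ β Nat.factorial
    (tendsto_atTop_mono Nat.self_le_factorial tendsto_id) (norm_one_ne hv) hF
  have hle := L1rest_le_beta hμ hψ hne hinv
  by_cases htop : Wsub μ hμ β ψ hψ = ⊤
  · rw [htop, L1rest_top] at hle
    exact hle
  · by_contra hcon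
    exact hqi ⟨_, hne, htop, hinv, by linarith⟩

/-- The averaged contraction for `μ₀`. -/
lemma exists_contraction (hd : 2 ≤ d) {μ : Measure (GLd d)} [IsProbabilityMeasure μ] {M : ℝ}
    (hM : 1 ≤ M) (hμ : ∀ᵐ g ∂μ, Bd M g) (hqi : QuasiIrreducible μ) (hgap : L2 μ < L1 μ) :
    ∃ α : ℝ, 0 < α ∧ α ≤ 1 ∧ ∃ κ : ℝ, 0 ≤ κ ∧ κ < 1 ∧ ∃ n : ℕ, 1 ≤ n ∧ ∀ x y : Pd d,
      ∫⁻ g, ENNReal.ofReal (pdelta (pact g x) (pact g y) ^ α) ∂(mconvN μ n) ≤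
        ENNReal.ofReal κ * ENNReal.ofReal (pdelta x y ^ α) := by
  obtain ⟨β, -, hβ⟩ := exists_beta hd hμ
  have hL1 := L1_le_beta hd hM hμ hqi hβ
  have hgap' : L12 μ < 2 * β := by
    rw [L2] at hgap; linarith
  set η : ℝ := (2 * β - L12 μ) / 4 with hη
  have hη0 : 0 < η := by rw [hη]; linarith
  obtain ⟨n, ⟨h1, h2⟩, hn⟩ := ((((tendsto_L12 hd hμ).eventually
    (gt_mem_nhds (show L12 μ < L12 μ + η by linarith))).and (hβ.eventually
    (lt_mem_nhds (show β - η < β by linarith)))).and (eventually_ge_atTop 1)).exists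
  have hn0 : (0 : ℝ) < n := by exact_mod_cast hn
  rw [← div_eq_inv_mul, div_lt_iff₀ hn0] at h1
  rw [lt_div_iff₀ hn0] at h2
  have hlM : 0 ≤ Real.log M := Real.log_nonneg hM
  set B : ℝ := 4 * (n * Real.log M) + 1 with hB
  have hB1 : 1 ≤ B := by
    have : 0 ≤ n * Real.log M := by positivity
    linarith
  have hB0 : 0 < B := by linarith
  set c : ℝ := n * η with hc
  have hc0 : 0 < c := by positivity
  obtain ⟨α, hα0, hα1, hα2, hα3, hα4⟩ : ∃ α : ℝ, 0 < α ∧ α ≤ 1 ∧ α * B ≤ 1 ∧ α * B ^ 2 ≤ c / 2 ∧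
      α * c ≤ 1 := by
    refine ⟨min (1 / B) (min (c / 2 / B ^ 2) (1 / c)), by positivity, ?_, ?_, ?_, ?_⟩
    · refine (min_le_left _ _).trans ?_
      rw [div_le_one hB0]; exact hB1
    · calc _ ≤ 1 / B * B := by gcongr; exact min_le_left _ _
        _ = 1 := by field_simp
    · calc _ ≤ c / 2 / B ^ 2 * B ^ 2 := by
            gcongr; exact (min_le_right _ _).trans (min_le_left _ _)
        _ = _ := by field_simp
    · calc _ ≤ 1 / c * c := by gcongr; exact (min_le_right _ _).trans (min_le_right _ _)
        _ = 1 := by field_simp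
  refine ⟨α, hα0, hα1, 1 - α * c / 2, by linarith, by have := mul_pos hα0 hc0; linarith, n, hn, ?_⟩
  intro x y
  induction x using Projectivization.ind with
  | h v hv =>
  induction y using Projectivization.ind with
  | h w hw =>
  set X : GLd d → ℝ := fun g => Real.log (N2 g) - (Real.log ‖glCLM g v‖ - Real.log ‖v‖)
    - (Real.log ‖glCLM g w‖ - Real.log ‖w‖) with hX
  have hN : Measurable (fun g : GLd d => Real.log (N2 g)) := measurable_N2.log
  have hv1 := measurable_lognorm v
  have hw1 := measurable_lognorm w
  have hXm : Measurable X := by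
    rw [hX]; fun_prop
  have hNb : ∀ᵐ g ∂(mconvN μ n), |Real.log (N2 g)| ≤ 2 * (n * Real.log M) := by
    filter_upwards [ae_Bd hμ n] with g hg
    have := hg.log_N2 hd
    rwa [Real.log_pow] at this
  have hXb : ∀ᵐ g ∂(mconvN μ n), |X g| ≤ B := by
    filter_upwards [hNb, ae_lognorm hμ n hv, ae_lognorm hμ n hw] with g a1 a2 a3
    rw [abs_le] at *
    constructor <;> simp only [hX] <;> linarith
  have hXi : ∫ g, X g ∂(mconvN μ n) ≤ -c := by
    have i1 : Integrable (fun g : GLd d => Real.log (N2 g)) (mconvN μ n) := integrable_of_bdd hN hNb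
    have i2 : Integrable (fun g => Real.log ‖glCLM g v‖ - Real.log ‖v‖) (mconvN μ n) :=
      (integrable_lognorm hμ n hv).sub (integrable_const _)
    have i3 : Integrable (fun g => Real.log ‖glCLM g w‖ - Real.log ‖w‖) (mconvN μ n) :=
      (integrable_lognorm hμ n hw).sub (integrable_const _)
    have i4 : Integrable (fun g : GLd d => Real.log (N2 g) -
      (Real.log ‖glCLM g v‖ - Real.log ‖v‖)) (mconvN μ n) := i1.sub i2
    simp only [hX]
    rw [integral_sub i4 i3, integral_sub i1 i2,
      integral_sub (integrable_lognorm hμ n hv) (integrable_const _),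
      integral_sub (integrable_lognorm hμ n hw) (integrable_const _)]
    simp only [integral_const, probReal_univ, smul_eq_mul, one_mul]
    have u1 := Aav_unit hμ n hv
    have u2 := ainf_le hμ n (norm_unit hv)
    have u3 := Aav_unit hμ n hw
    have u4 := ainf_le hμ n (norm_unit hw)
    rw [Aav] at u1 u3
    have : (L12 μ + η) * n - 2 * ((β - η) * n) = -c := by
      rw [hc, hη]; ring
    linarith
  have hmom := exp_moment hXm hXb hXi hα0.le hα2
  have hpt : ∀ g : GLd d, ENNReal.ofReal (pdelta (pact g (Projectivization.mk ℝ v hv))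
      (pact g (Projectivization.mk ℝ w hw)) ^ α) ≤ ENNReal.ofReal (Real.exp (α * X g)) *
      ENNReal.ofReal (pdelta (Projectivization.mk ℝ v hv) (Projectivization.mk ℝ w hw) ^ α) := by
    intro g
    rw [← ENNReal.ofReal_mul (Real.exp_pos _).le]
    apply ENNReal.ofReal_le_ofReal
    have p1 := pdelta_pact_le g v w hv hw
    have e : N2 g * (‖v‖ / ‖glCLM g v‖) * (‖w‖ / ‖glCLM g w‖) = Real.exp (X g) := by
      have q1 := norm_pos_iff.2 hv
      have q2 := norm_pos_iff.2 hw
      have q3 := norm_pos_iff.2 (glCLM_ne_zero g hv)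
      have q4 := norm_pos_iff.2 (glCLM_ne_zero g hw)
      simp only [hX]
      rw [Real.exp_sub, Real.exp_sub, Real.exp_sub, Real.exp_sub, Real.exp_log q1,
        Real.exp_log q2, Real.exp_log q3, Real.exp_log q4, Real.exp_log (N2_pos hd g)]
      field_simp
    rw [e] at p1
    calc _ ≤ (Real.exp (X g) * pdelta (Projectivization.mk ℝ v hv)
          (Projectivization.mk ℝ w hw)) ^ α :=
          Real.rpow_le_rpow (pdelta_nonneg _ _) p1 hα0.le
      _ = _ := by
          rw [Real.mul_rpow (Real.exp_pos _).le (pdelta_nonneg _ _), ← Real.exp_mul, mul_comm (X g)]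
  refine (lintegral_mono hpt).trans ?_
  rw [lintegral_mul_const' _ _ ENNReal.ofReal_ne_top]
  refine mul_le_mul_left (hmom.trans (ENNReal.ofReal_le_ofReal ?_)) _
  nlinarith


/-- The two-point transfer operator. -/
def R2 (μ : Measure (GLd d)) (Ψ : Pd d → Pd d → ENNReal) : Pd d → Pd d → ENNReal :=
  fun x y => ∫⁻ g, Ψ (pact g x) (pact g y) ∂μ

/-- The `α`-th power of the projective distance as an extended nonnegative real. -/
def Psi (α : ℝ) (x y : Pd d) : ENNReal := ENNReal.ofReal (pdelta x y ^ α)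

lemma measurable_Psi (α : ℝ) (hα : 0 < α) (x y : Pd d) :
    Measurable (fun g : GLd d => Psi α (pact g x) (pact g y)) := by
  have h : Continuous (fun g : GLd d => pdelta (pact g x) (pact g y) ^ α) :=
    (continuous_pdelta_pact₂ x y).rpow_const (fun _ => Or.inr hα.le)
  exact h.measurable.ennreal_ofReal

lemma R2_mono (μ : Measure (GLd d)) {Ψ Φ : Pd d → Pd d → ENNReal} (h : ∀ x y, Ψ x y ≤ Φ x y)
    (x y : Pd d) : R2 μ Ψ x y ≤ R2 μ Φ x y :=
  lintegral_mono (fun g => h (pact g x) (pact g y))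

lemma R2_iter_mono (μ : Measure (GLd d)) {Ψ Φ : Pd d → Pd d → ENNReal} (n : ℕ)
    (h : ∀ x y, Ψ x y ≤ Φ x y) (x y : Pd d) : (R2 μ)^[n] Ψ x y ≤ (R2 μ)^[n] Φ x y := by
  induction n generalizing x y with
  | zero => exact h x y
  | succ n ih =>
    rw [Function.iterate_succ_apply', Function.iterate_succ_apply']
    exact R2_mono μ ih x y

lemma R2_const_mul (μ : Measure (GLd d)) (Ψ : Pd d → Pd d → ENNReal) {c : ENNReal}
    (hc : c ≠ ⊤) : R2 μ (fun x y => c * Ψ x y) = fun x y => c * R2 μ Ψ x y := by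
  funext x y
  exact lintegral_const_mul' c _ hc

lemma R2_iter_const_mul (μ : Measure (GLd d)) (Ψ : Pd d → Pd d → ENNReal) {c : ENNReal}
    (hc : c ≠ ⊤) (n : ℕ) :
    (R2 μ)^[n] (fun x y => c * Ψ x y) = fun x y => c * (R2 μ)^[n] Ψ x y := by
  induction n with
  | zero => rfl
  | succ n ih =>
    rw [Function.iterate_succ_apply', ih, R2_const_mul _ _ hc, Function.iterate_succ_apply']

lemma R2_iter_eq (μ : Measure (GLd d)) [IsProbabilityMeasure μ] {α : ℝ} (hα : 0 < α) (n : ℕ)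
    (x y : Pd d) : (R2 μ)^[n] (Psi α) x y =
      ∫⁻ g, Psi α (pact g x) (pact g y) ∂(mconvN μ n) := by
  induction n generalizing x y with
  | zero =>
    rw [show mconvN μ 0 = Measure.dirac 1 from rfl, lintegral_dirac' _ (measurable_Psi α hα x y),
      pact_one, pact_one]
    rfl
  | succ n ih =>
    rw [Function.iterate_succ_apply', lintegral_mconvN μ n 1 (measurable_Psi α hα x y),
      mconvN_one]
    apply lintegral_congr
    intro h
    rw [ih]
    apply lintegral_congr
    intro g
    rw [pact_mul, pact_mul]

lemma Bd.Psi_le {M α : ℝ} (hM : 1 ≤ M) (hα : 0 < α) (hα1 : α ≤ 1) {g : GLd d} (hg : Bd M g)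
    (x y : Pd d) : Psi α (pact g x) (pact g y) ≤ ENNReal.ofReal (M ^ 4) * Psi α x y := by
  have hM4 : 1 ≤ M ^ 4 := one_le_pow₀ hM
  rw [Psi, Psi, ← ENNReal.ofReal_mul (by positivity)]
  apply ENNReal.ofReal_le_ofReal
  calc pdelta (pact g x) (pact g y) ^ α ≤ (M ^ 4 * pdelta x y) ^ α :=
        Real.rpow_le_rpow (pdelta_nonneg _ _) (hg.pdelta_le x y) hα.le
    _ = (M ^ 4) ^ α * pdelta x y ^ α :=
        Real.mul_rpow (by positivity) (pdelta_nonneg _ _)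
    _ ≤ M ^ 4 * pdelta x y ^ α := by
        apply mul_le_mul_of_nonneg_right _ (Real.rpow_nonneg (pdelta_nonneg _ _) _)
        calc (M ^ 4) ^ α ≤ (M ^ 4) ^ (1 : ℝ) := Real.rpow_le_rpow_of_exponent_le hM4 hα1
          _ = M ^ 4 := Real.rpow_one _

lemma R2_Psi_le {M α : ℝ} (hM : 1 ≤ M) (hα : 0 < α) (hα1 : α ≤ 1) (ρ : Measure (GLd d))
    (hρ : ∀ᵐ g ∂ρ, Bd M g) (x y : Pd d) :
    R2 ρ (Psi α) x y ≤ ρ Set.univ * (ENNReal.ofReal (M ^ 4) * Psi α x y) := by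
  calc R2 ρ (Psi α) x y ≤ ∫⁻ _, ENNReal.ofReal (M ^ 4) * Psi α x y ∂ρ := by
        apply lintegral_mono_ae
        filter_upwards [hρ] with g hg
        exact hg.Psi_le hM hα hα1 x y
    _ = _ := by rw [lintegral_const, mul_comm]

lemma R2_iter_le {M α : ℝ} (hM : 1 ≤ M) (hα : 0 < α) (hα1 : α ≤ 1) (μ : Measure (GLd d))
    [IsProbabilityMeasure μ] (hμ : ∀ᵐ g ∂μ, Bd M g) (n : ℕ) (x y : Pd d) :
    (R2 μ)^[n] (Psi α) x y ≤ ENNReal.ofReal (M ^ 4) ^ n * Psi α x y := by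
  induction n generalizing x y with
  | zero => simp
  | succ n ih =>
    rw [Function.iterate_succ_apply']
    refine (R2_mono μ ih x y).trans ?_
    rw [R2_const_mul _ _ (ENNReal.pow_ne_top ENNReal.ofReal_ne_top),
      pow_succ (ENNReal.ofReal (M ^ 4)) n, mul_assoc]
    have h := R2_Psi_le hM hα hα1 μ hμ x y
    rw [measure_univ, one_mul] at h
    exact mul_le_mul' le_rfl h

/-- The error constants of the perturbation argument. -/
def eseq (D : ℝ) : ℕ → ℝ
  | 0 => 0
  | n + 1 => D ^ (n + 1) + D * eseq D n

lemma eseq_nonneg {D : ℝ} (hD : 0 ≤ D) (n : ℕ) : 0 ≤ eseq D n := by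
  induction n with
  | zero => exact le_rfl
  | succ n ih => rw [eseq]; positivity

lemma R2_perturb {M α : ℝ} (hM : 1 ≤ M) (hα : 0 < α) (hα1 : α ≤ 1) (μ μ₀ ρ : Measure (GLd d))
    [IsProbabilityMeasure μ] [IsProbabilityMeasure μ₀] (hμ : ∀ᵐ g ∂μ, Bd M g)
    (hμ₀ : ∀ᵐ g ∂μ₀, Bd M g) (hρ : ∀ᵐ g ∂ρ, Bd M g) (hle : μ ≤ μ₀ + ρ) {ε : ℝ}
    (hε : 0 ≤ ε) (hρε : ρ Set.univ ≤ ENNReal.ofReal ε) (n : ℕ) (x y : Pd d) :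
    (R2 μ)^[n] (Psi α) x y ≤
      (R2 μ₀)^[n] (Psi α) x y + ENNReal.ofReal (ε * eseq (M ^ 4) n) * Psi α x y := by
  have hD : 0 ≤ M ^ 4 := by positivity
  induction n generalizing x y with
  | zero => simp
  | succ n ih =>
    rw [Function.iterate_succ_apply', Function.iterate_succ_apply']
    set A := (R2 μ₀)^[n] (Psi α) with hA
    have h1 : R2 μ ((R2 μ)^[n] (Psi α)) x y ≤ R2 μ A x y +
        ENNReal.ofReal (ε * eseq (M ^ 4) n) * R2 μ (Psi α) x y := by
      refine (R2_mono μ ih x y).trans (le_of_eq ?_)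
      rw [R2, lintegral_add_right _ ((measurable_Psi α hα x y).const_mul _),
        lintegral_const_mul _ (measurable_Psi α hα x y)]
      rfl
    have h2 : R2 μ A x y ≤ R2 μ₀ A x y + R2 ρ A x y := by
      rw [R2, R2, R2, ← lintegral_add_measure]
      exact lintegral_mono' hle le_rfl
    have h3 : R2 ρ A x y ≤ ENNReal.ofReal (ε * (M ^ 4) ^ (n + 1)) * Psi α x y := by
      refine (R2_mono ρ (R2_iter_le hM hα hα1 μ₀ hμ₀ n) x y).trans ?_
      rw [R2_const_mul _ _ (ENNReal.pow_ne_top ENNReal.ofReal_ne_top)]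
      calc ENNReal.ofReal (M ^ 4) ^ n * R2 ρ (Psi α) x y
          ≤ ENNReal.ofReal (M ^ 4) ^ n *
            (ENNReal.ofReal ε * (ENNReal.ofReal (M ^ 4) * Psi α x y)) := by
            gcongr
            refine (R2_Psi_le hM hα hα1 ρ hρ x y).trans ?_
            gcongr
        _ = _ := by
            rw [ENNReal.ofReal_mul hε, ENNReal.ofReal_pow hD (n + 1), pow_succ]
            ring
    have h4 : R2 μ (Psi α) x y ≤ ENNReal.ofReal (M ^ 4) * Psi α x y := by
      have h := R2_Psi_le hM hα hα1 μ hμ x y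
      rwa [measure_univ, one_mul] at h
    have he := eseq_nonneg hD n
    calc R2 μ ((R2 μ)^[n] (Psi α)) x y
        ≤ (R2 μ₀ A x y + ENNReal.ofReal (ε * (M ^ 4) ^ (n + 1)) * Psi α x y) +
          ENNReal.ofReal (ε * eseq (M ^ 4) n) * (ENNReal.ofReal (M ^ 4) * Psi α x y) := by
          refine h1.trans ?_
          gcongr
          exact h2.trans (by gcongr)
      _ = R2 μ₀ A x y + (ENNReal.ofReal (ε * (M ^ 4) ^ (n + 1)) +
          ENNReal.ofReal (ε * eseq (M ^ 4) n) * ENNReal.ofReal (M ^ 4)) * Psi α x y := by ring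
      _ = _ := by
          rw [← ENNReal.ofReal_mul (by positivity), ← ENNReal.ofReal_add (by positivity)
            (by positivity), eseq]
          congr 3
          ring

lemma le_add_tv (μ μ₀ : Measure (GLd d)) [IsProbabilityMeasure μ] [IsProbabilityMeasure μ₀] :
    μ ≤ μ₀ + (μ.toSignedMeasure - μ₀.toSignedMeasure).totalVariation := by
  rw [Measure.le_iff]
  intro s hs
  set σ := μ.toSignedMeasure - μ₀.toSignedMeasure with hσ
  have h1 := σ.apply_eq_posPart_real_sub_negPart_real hs
  rw [hσ, Measure.toSignedMeasure_sub_apply hs, ← hσ] at h1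
  have h2 : μ.real s ≤ μ₀.real s + σ.toJordanDecomposition.posPart.real s := by
    have : 0 ≤ σ.toJordanDecomposition.negPart.real s := measureReal_nonneg
    linarith
  have h3 : μ s ≤ μ₀ s + σ.toJordanDecomposition.posPart s := by
    rw [measureReal_def, measureReal_def, measureReal_def, ← ENNReal.toReal_add
      (measure_ne_top _ _) (measure_ne_top _ _)] at h2
    exact (ENNReal.toReal_le_toReal (measure_ne_top _ _) (by finiteness)).1 h2
  refine h3.trans ?_
  rw [Measure.add_apply, SignedMeasure.totalVariation, Measure.add_apply]
  gcongr
  exact le_self_add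

lemma exists_rho {M : ℝ} (μ μ₀ : Measure (GLd d)) [IsProbabilityMeasure μ]
    [IsProbabilityMeasure μ₀] (hμ : ∀ᵐ g ∂μ, Bd M g) {ε : ℝ} (h : tvDist μ μ₀ < ε) :
    ∃ ρ : Measure (GLd d), (∀ᵐ g ∂ρ, Bd M g) ∧ μ ≤ μ₀ + ρ ∧ ρ Set.univ ≤ ENNReal.ofReal ε := by
  set ρ := (μ.toSignedMeasure - μ₀.toSignedMeasure).totalVariation with hρ
  have hfin : ρ Set.univ ≠ ⊤ := by
    rw [hρ, SignedMeasure.totalVariation]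
    exact measure_ne_top _ _
  refine ⟨ρ.restrict {g | Bd M g}, ae_restrict_mem (measurableSet_Bd M), ?_, ?_⟩
  · calc μ = μ.restrict {g | Bd M g} := (Measure.restrict_eq_self_of_ae_mem hμ).symm
      _ ≤ (μ₀ + ρ).restrict {g | Bd M g} := Measure.restrict_mono le_rfl (le_add_tv μ μ₀)
      _ = μ₀.restrict {g | Bd M g} + ρ.restrict {g | Bd M g} := Measure.restrict_add _ _ _
      _ ≤ _ := by
        gcongr
        exact Measure.restrict_le_self
  · calc _ ≤ ρ Set.univ := Measure.restrict_le_self _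
      _ = ENNReal.ofReal (tvDist μ μ₀) := (ENNReal.ofReal_toReal hfin).symm
      _ ≤ _ := ENNReal.ofReal_le_ofReal h.le

/-- Hölder bound with explicit constant. -/
def HB (α c : ℝ) (φ : Pd d → ℝ) : Prop := ∀ x y, |φ x - φ y| ≤ c * pdelta x y ^ α

lemma rpow_pdelta_pos {x y : Pd d} (h : x ≠ y) (α : ℝ) : 0 < pdelta x y ^ α :=
  Real.rpow_pos_of_pos (lt_of_le_of_ne (pdelta_nonneg x y)
    (fun h0 => h (eq_of_pdelta x y h0.symm))) α

lemma valpha_nonneg (α : ℝ) (φ : Pd d → ℝ) : 0 ≤ valpha α φ := by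
  apply Real.sSup_nonneg
  rintro _ ⟨x, y, _, rfl⟩
  exact div_nonneg (abs_nonneg _) (Real.rpow_nonneg (pdelta_nonneg _ _) _)

lemma IsHolder.hb {α : ℝ} {φ : Pd d → ℝ} (h : IsHolder α φ) : HB α (valpha α φ) φ := by
  intro x y
  by_cases hxy : x = y
  · subst hxy
    rw [sub_self, abs_zero]
    exact mul_nonneg (valpha_nonneg _ _) (Real.rpow_nonneg (pdelta_nonneg _ _) _)
  · rw [← div_le_iff₀ (rpow_pdelta_pos hxy α)]
    exact le_csSup h ⟨x, y, hxy, rfl⟩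

lemma HB.valpha_le {α c : ℝ} {φ : Pd d → ℝ} (hc : 0 ≤ c) (h : HB α c φ) : valpha α φ ≤ c := by
  apply Real.sSup_le _ hc
  rintro _ ⟨x, y, hxy, rfl⟩
  rw [div_le_iff₀ (rpow_pdelta_pos hxy α)]
  exact h x y

lemma HB.continuous {α c : ℝ} (hα : 0 < α) {φ : Pd d → ℝ} (h : HB α c φ)
    (x : Pd d) : Continuous (fun g : GLd d => φ (pact g x)) := by
  rw [continuous_iff_continuousAt]
  intro g₀
  rw [ContinuousAt, tendsto_iff_dist_tendsto_zero]
  have h1 : Tendsto (fun g : GLd d => c * pdelta (pact g x) (pact g₀ x) ^ α) (nhds g₀)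
      (nhds 0) := by
    have h2 : Continuous (fun g : GLd d => c * pdelta (pact g x) (pact g₀ x) ^ α) :=
      continuous_const.mul ((continuous_pdelta_pact₁ x (pact g₀ x)).rpow_const
        (fun _ => Or.inr hα.le))
    have h3 := h2.tendsto g₀
    rwa [pdelta_self, Real.zero_rpow hα.ne', mul_zero] at h3
  refine squeeze_zero (fun _ => dist_nonneg) (fun g => ?_) h1
  rw [Real.dist_eq]
  exact h _ _

lemma HB.integrable {α c : ℝ} (hα : 0 < α) (hc : 0 ≤ c) {φ : Pd d → ℝ} (h : HB α c φ)
    (μ : Measure (GLd d)) [IsProbabilityMeasure μ] (x : Pd d) :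
    Integrable (fun g : GLd d => φ (pact g x)) μ := by
  refine integrable_of_bdd (h.continuous hα x).measurable (C := |φ x| + c) (ae_of_all _ ?_)
  intro g
  have h1 := h (pact g x) x
  have h2 : c * pdelta (pact g x) x ^ α ≤ c :=
    mul_le_of_le_one_right hc (Real.rpow_le_one (pdelta_nonneg _ _) (pdelta_le_one _ _) hα.le)
  have h3 : |φ (pact g x)| ≤ |φ (pact g x) - φ x| + |φ x| := by
    have := abs_add_le (φ (pact g x) - φ x) (φ x)
    rwa [sub_add_cancel] at this
  linarith

lemma hb_of_enorm {α c : ℝ} (hc : 0 ≤ c) {φ : Pd d → ℝ}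
    (h : ∀ x y, ‖φ x - φ y‖ₑ ≤ ENNReal.ofReal c * Psi α x y) : HB α c φ := by
  intro x y
  have h1 := h x y
  have h2 : 0 ≤ pdelta x y ^ α := Real.rpow_nonneg (pdelta_nonneg _ _) _
  rw [Psi, ← ENNReal.ofReal_mul hc, Real.enorm_eq_ofReal_abs] at h1
  exact (ENNReal.ofReal_le_ofReal_iff (mul_nonneg hc h2)).1 h1

lemma HB.enorm_le {α c : ℝ} (hc : 0 ≤ c) {φ : Pd d → ℝ} (h : HB α c φ) (x y : Pd d) :
    ‖φ x - φ y‖ₑ ≤ ENNReal.ofReal c * Psi α x y := by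
  rw [Psi, ← ENNReal.ofReal_mul hc, Real.enorm_eq_ofReal_abs]
  exact ENNReal.ofReal_le_ofReal (h x y)

lemma Qop_iter_le {M α c : ℝ} (hM : 1 ≤ M) (hα : 0 < α) (hα1 : α ≤ 1) (hc : 0 ≤ c)
    (μ : Measure (GLd d)) [IsProbabilityMeasure μ] (hμ : ∀ᵐ g ∂μ, Bd M g) {φ : Pd d → ℝ}
    (h : HB α c φ) (n : ℕ) (x y : Pd d) :
    ‖(Qop μ)^[n] φ x - (Qop μ)^[n] φ y‖ₑ ≤ ENNReal.ofReal c * (R2 μ)^[n] (Psi α) x y := by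
  induction n generalizing x y with
  | zero => exact h.enorm_le hc x y
  | succ n ih =>
    have hD : 0 ≤ M ^ 4 := by positivity
    have hn : HB α (c * (M ^ 4) ^ n) ((Qop μ)^[n] φ) := by
      apply hb_of_enorm (by positivity)
      intro x y
      refine (ih x y).trans ?_
      rw [ENNReal.ofReal_mul hc, ENNReal.ofReal_pow hD, mul_assoc]
      gcongr
      exact R2_iter_le hM hα hα1 μ hμ n x y
    have hi := hn.integrable hα (by positivity) μ
    rw [Function.iterate_succ_apply', Function.iterate_succ_apply', Qop, Qop,
      ← integral_sub (hi x) (hi y)]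
    refine (enorm_integral_le_lintegral_enorm _).trans ?_
    refine (lintegral_mono (fun g => ih (pact g x) (pact g y))).trans (le_of_eq ?_)
    exact lintegral_const_mul' _ _ ENNReal.ofReal_ne_top

lemma R2_block (μ : Measure (GLd d)) {α κ : ℝ} (hκ : 0 ≤ κ) {N : ℕ}
    (h : ∀ x y, (R2 μ)^[N] (Psi α) x y ≤ ENNReal.ofReal κ * Psi α x y) (q : ℕ) (x y : Pd d) :
    (R2 μ)^[N * q] (Psi α) x y ≤ ENNReal.ofReal (κ ^ q) * Psi α x y := by
  induction q generalizing x y with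
  | zero => simp
  | succ q ih =>
    rw [Nat.mul_succ, add_comm, Function.iterate_add_apply]
    refine (R2_iter_mono μ N ih x y).trans ?_
    rw [R2_iter_const_mul _ _ ENNReal.ofReal_ne_top, pow_succ, ENNReal.ofReal_mul (by positivity),
      mul_assoc]
    exact mul_le_mul' le_rfl (h x y)

lemma R2_all {M α κ : ℝ} (hM : 1 ≤ M) (hα : 0 < α) (hα1 : α ≤ 1) (hκ : 0 < κ)
    (hκ1 : κ < 1) (μ : Measure (GLd d)) [IsProbabilityMeasure μ] (hμ : ∀ᵐ g ∂μ, Bd M g)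
    {N : ℕ} (hN : 1 ≤ N)
    (h : ∀ x y, (R2 μ)^[N] (Psi α) x y ≤ ENNReal.ofReal κ * Psi α x y) (n : ℕ) (x y : Pd d) :
    (R2 μ)^[n] (Psi α) x y ≤ ENNReal.ofReal
      ((M ^ 4) ^ N * κ⁻¹ * (κ ^ (-(1 / N : ℝ))) ^ (-(n : ℝ))) * Psi α x y := by
  have hM4 : 1 ≤ M ^ 4 := one_le_pow₀ hM
  have hD : 0 ≤ M ^ 4 := by positivity
  have h1 : (R2 μ)^[n] (Psi α) x y ≤
      ENNReal.ofReal (κ ^ (n / N)) * (ENNReal.ofReal (M ^ 4) ^ (n % N) * Psi α x y) := by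
    conv_lhs => rw [← Nat.mod_add_div n N, Function.iterate_add_apply]
    refine (R2_iter_mono μ (n % N) (R2_block μ hκ.le h (n / N)) x y).trans ?_
    rw [R2_iter_const_mul _ _ ENNReal.ofReal_ne_top]
    exact mul_le_mul' le_rfl (R2_iter_le hM hα hα1 μ hμ _ x y)
  refine h1.trans ?_
  rw [← mul_assoc, ← ENNReal.ofReal_pow hD, ← ENNReal.ofReal_mul (by positivity)]
  refine mul_le_mul' (ENNReal.ofReal_le_ofReal ?_) le_rfl
  have hN0 : (0 : ℝ) < N := by exact_mod_cast hN
  have h2 : (M ^ 4) ^ (n % N) ≤ (M ^ 4) ^ N :=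
    pow_le_pow_right₀ hM4 (Nat.mod_lt _ hN).le
  have h3 : κ ^ (n / N) ≤ κ⁻¹ * (κ ^ (-(1 / N : ℝ))) ^ (-(n : ℝ)) := by
    rw [← Real.rpow_mul hκ.le, ← Real.rpow_neg_one κ, ← Real.rpow_add hκ, ← Real.rpow_natCast]
    apply Real.rpow_le_rpow_of_exponent_ge hκ hκ1.le
    have h4 : (n : ℝ) < N * ((n / N : ℕ) : ℝ) + N := by
      exact_mod_cast Nat.lt_mul_div_succ n hN
    have h5 : (n : ℝ) / N < ((n / N : ℕ) : ℝ) + 1 := by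
      rw [div_lt_iff₀ hN0]
      linarith
    have h6 : -(1 / (N : ℝ)) * -(n : ℝ) = n / N := by ring
    linarith
  calc κ ^ (n / N) * (M ^ 4) ^ (n % N)
      ≤ (κ⁻¹ * (κ ^ (-(1 / N : ℝ))) ^ (-(n : ℝ))) * (M ^ 4) ^ N := by gcongr
    _ = _ := by ring

theorem contraction_of_valpha
    (d : ℕ) (hd : 2 ≤ d) (S : Set (GLd d)) (hS : IsCompact S)
    (μ₀ : Measure (GLd d)) [IsProbabilityMeasure μ₀] (hμ₀S : μ₀ Sᶜ = 0)
    (hqi : QuasiIrreducible μ₀) (hgap : L2 μ₀ < L1 μ₀) :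
    ∃ α : ℝ, 0 < α ∧ α ≤ 1 ∧ ∃ θ : ℝ, 1 < θ ∧ ∃ C : ℝ, 0 < C ∧ ∃ ε : ℝ, 0 < ε ∧
      ∀ (μ : Measure (GLd d)) [IsProbabilityMeasure μ], μ Sᶜ = 0 →
        tvDist μ μ₀ < ε → ∀ n : ℕ, 1 ≤ n → ∀ φ : Pd d → ℝ, IsHolder α φ →
          valpha α ((Qop μ)^[n] φ) ≤ C * θ ^ (-(n : ℝ)) * valpha α φ := by
  obtain ⟨M, hM, hSM⟩ := exists_Bd S hS
  have hsupp : ∀ μ : Measure (GLd d), μ Sᶜ = 0 → ∀ᵐ g ∂μ, Bd M g := by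
    intro μ hμ
    have h : ∀ᵐ g ∂μ, g ∈ S := hμ
    filter_upwards [h] with g hg using hSM g hg
  have hμ₀ := hsupp μ₀ hμ₀S
  obtain ⟨α, hα, hα1, κ, hκ0, hκ1, N, hN, hcon⟩ := exists_contraction hd hM hμ₀ hqi hgap
  have hD : 0 ≤ M ^ 4 := by positivity
  have he := eseq_nonneg hD N
  set κ' : ℝ := (1 + κ) / 2 with hκ'
  have hκ'0 : 0 < κ' := by rw [hκ']; linarith
  have hκ'1 : κ' < 1 := by rw [hκ']; linarith
  set ε : ℝ := (1 - κ) / 2 / (1 + eseq (M ^ 4) N) with hεdef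
  have hε : 0 < ε := by
    rw [hεdef]
    apply div_pos _ (by linarith)
    linarith
  have hεe : κ + ε * eseq (M ^ 4) N ≤ κ' := by
    have h1 : ε * (1 + eseq (M ^ 4) N) = (1 - κ) / 2 := by
      rw [hεdef]
      exact div_mul_cancel₀ _ (by linarith)
    rw [hκ']
    nlinarith
  have hN0 : (0 : ℝ) < N := by exact_mod_cast hN
  refine ⟨α, hα, hα1, κ' ^ (-(1 / N : ℝ)), ?_, (M ^ 4) ^ N * κ'⁻¹, by positivity, ε, hε, ?_⟩
  · apply Real.one_lt_rpow_of_pos_of_lt_one_of_neg hκ'0 hκ'1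
    have : 0 < 1 / (N : ℝ) := by positivity
    linarith
  intro μ _ hμS htv n _ φ hφ
  have hμ := hsupp μ hμS
  obtain ⟨ρ, hρ, hle, hρε⟩ := exists_rho μ μ₀ hμ htv
  have hblock : ∀ x y, (R2 μ)^[N] (Psi α) x y ≤ ENNReal.ofReal κ' * Psi α x y := by
    intro x y
    refine (R2_perturb hM hα hα1 μ μ₀ ρ hμ hμ₀ hρ hle hε.le hρε N x y).trans ?_
    rw [R2_iter_eq μ₀ hα]
    have h1 : ∫⁻ g, Psi α (pact g x) (pact g y) ∂(mconvN μ₀ N) ≤ ENNReal.ofReal κ * Psi α x y :=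
      hcon x y
    calc _ ≤ ENNReal.ofReal κ * Psi α x y +
          ENNReal.ofReal (ε * eseq (M ^ 4) N) * Psi α x y := by gcongr
      _ = ENNReal.ofReal (κ + ε * eseq (M ^ 4) N) * Psi α x y := by
          rw [← add_mul, ENNReal.ofReal_add hκ0 (by positivity)]
      _ ≤ _ := by gcongr
  have hv := valpha_nonneg α φ
  apply HB.valpha_le (by positivity)
  apply hb_of_enorm (by positivity)
  intro x y
  refine (Qop_iter_le hM hα hα1 hv μ hμ hφ.hb n x y).trans ?_
  have h2 := R2_all hM hα hα1 hκ'0 hκ'1 μ hμ hN hblock n x y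
  rw [mul_comm _ (valpha α φ), ENNReal.ofReal_mul hv, mul_assoc]
  gcongr

end
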